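/- arXiv:1511.01075 — 4 statements merged into one kernel-verified Lean document; each statement's English description precedes it below -/
import Mathlib

section
/- Let 𝔽 be an infinite field of characteristic p with 0 < p ≤ n and p ≠ 2, and let d ≥ 1. Then the invariant tr(X₁ X₂ ⋯ X_d) is indecomposable in the algebra R^{O(n)} of matrix O(n)-invariants; that is, tr(X₁⋯X_d) does not lie in the 𝔽-span of products g·h with g, h ∈ R^{O(n)} homogeneous of positive degree. -/
open Matrix
noncomputable section

/-- The polynomial ring `R = 𝔽[x_{ij}(k)]` in `n² d` variables. -/
abbrev Rpoly (𝔽 : Type) [Field 𝔽] (n d : ℕ) : Type :=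
  MvPolynomial (Fin n × Fin n × Fin d) 𝔽

/-- The generic matrix `X_k` with `(X_k)_{ij} = x_{ij}(k)`. -/
def Xgen (𝔽 : Type) [Field 𝔽] (n d : ℕ) (k : Fin d) :
    Matrix (Fin n) (Fin n) (Rpoly 𝔽 n d) :=
  fun i j => MvPolynomial.X (i, j, k)

/-- The symmetric generic matrix `X_k⁺`. -/
def XgenSym (𝔽 : Type) [Field 𝔽] (n d : ℕ) (k : Fin d) :
    Matrix (Fin n) (Fin n) (Rpoly 𝔽 n d) :=
  fun i j => if j ≤ i then MvPolynomial.X (i, j, k) else MvPolynomial.X (j, i, k)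

/-- The skew-symmetric generic matrix `X_k⁻`. -/
def XgenSkew (𝔽 : Type) [Field 𝔽] (n d : ℕ) (k : Fin d) :
    Matrix (Fin n) (Fin n) (Rpoly 𝔽 n d) :=
  fun i j =>
    if j < i then MvPolynomial.X (i, j, k)
    else if i < j then - MvPolynomial.X (j, i, k)
    else 0

/-- `σ_t(A)`, the `t`-th coefficient of the characteristic polynomial of `A`
(so `σ₁ = tr`, `σ_n = det`). -/
def sigmaCoeff {𝔽 : Type} [Field 𝔽] {n d : ℕ} (t : ℕ)
    (A : Matrix (Fin n) (Fin n) (Rpoly 𝔽 n d)) : Rpoly 𝔽 n d :=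
  (-1) ^ t * A.charpoly.coeff (n - t)

/-- The algebra `R^{O(n)}` of matrix `O(n)`-invariants: generated by all `σ_t(A)`,
`1 ≤ t ≤ n`, where `A` is a nonempty product of generic and transposed generic matrices. -/
def invO (𝔽 : Type) [Field 𝔽] (n d : ℕ) : Subalgebra 𝔽 (Rpoly 𝔽 n d) :=
  Algebra.adjoin 𝔽
    {f | ∃ t, 1 ≤ t ∧ t ≤ n ∧
      ∃ w : List (Matrix (Fin n) (Fin n) (Rpoly 𝔽 n d)), w ≠ [] ∧
        (∀ m ∈ w, (∃ k, m = Xgen 𝔽 n d k) ∨ (∃ k, m = (Xgen 𝔽 n d k)ᵀ)) ∧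
        f = sigmaCoeff t w.prod}

/-- The algebra `R₊^{O(n)}`, generated by all `σ_t(A)` for `A` a nonempty product of
symmetric generic matrices. -/
def invOplus (𝔽 : Type) [Field 𝔽] (n d : ℕ) : Subalgebra 𝔽 (Rpoly 𝔽 n d) :=
  Algebra.adjoin 𝔽
    {f | ∃ t, 1 ≤ t ∧ t ≤ n ∧
      ∃ w : List (Matrix (Fin n) (Fin n) (Rpoly 𝔽 n d)), w ≠ [] ∧
        (∀ m ∈ w, ∃ k, m = XgenSym 𝔽 n d k) ∧
        f = sigmaCoeff t w.prod}

/-- The algebra `R₋^{O(n)}`, generated by all `σ_t(A)` for `A` a nonempty product of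
skew-symmetric generic matrices. -/
def invOminus (𝔽 : Type) [Field 𝔽] (n d : ℕ) : Subalgebra 𝔽 (Rpoly 𝔽 n d) :=
  Algebra.adjoin 𝔽
    {f | ∃ t, 1 ≤ t ∧ t ≤ n ∧
      ∃ w : List (Matrix (Fin n) (Fin n) (Rpoly 𝔽 n d)), w ≠ [] ∧
        (∀ m ∈ w, ∃ k, m = XgenSkew 𝔽 n d k) ∧
        f = sigmaCoeff t w.prod}

/-- `f` is decomposable in the subalgebra `A`: it lies in the `𝔽`-span of products `g·h`
with `g, h ∈ A` homogeneous of positive degree. -/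
def Decomposable (𝔽 : Type) [Field 𝔽] {n d : ℕ} (A : Subalgebra 𝔽 (Rpoly 𝔽 n d))
    (f : Rpoly 𝔽 n d) : Prop :=
  f ∈ Submodule.span 𝔽
    {x : Rpoly 𝔽 n d | ∃ g ∈ A, ∃ h ∈ A,
      (∃ i, 0 < i ∧ MvPolynomial.IsHomogeneous g i) ∧
      (∃ j, 0 < j ∧ MvPolynomial.IsHomogeneous h j) ∧ x = g * h}

/-!
Specialise the first generic matrix `X₀` to `a₀ E` and every other `X_k` to `a_k D`, where the `a_k`
are the generators of `𝔽[a₀, …, a_{d-1}] / (a_k²)`, `D` is the coordinate projection onto `p`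
coordinates and `E` the projection onto one of these. As `D` and `E` are symmetric, transposes may
be ignored. A word avoiding `X₀` becomes `s D` with `s² = 0`, and `tr D = p = 0`, so all its `σ_t`
vanish; a word containing `X₀` becomes a multiple of `a₀`, and so do its `σ_t`. Hence invariants
without constant term go to `(a₀)`, and decomposable ones to `(a₀)² = 0`. But `tr(X₀ ⋯ X_{d-1})`
goes to `a₀ ⋯ a_{d-1} ≠ 0`, because `E D = E` has trace `1`.
-/

section SquareZeroAlgebra

open MvPolynomial

variable (σ R : Type*) [CommRing R]

/-- The algebra `R[aᵢ : i ∈ σ] / (aᵢ²)` of squarefree polynomials, in which the generators have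
square zero while products of distinct generators survive. -/
abbrev SquareZeroAlgebra : Type _ :=
  MvPolynomial σ R ⧸ Ideal.span (Set.range fun i : σ => (X i ^ 2 : MvPolynomial σ R))

namespace SquareZeroAlgebra

variable {σ}

/-- The generator `aᵢ` of `R[aᵢ : i ∈ σ] / (aᵢ²)`. -/
def gen (i : σ) : SquareZeroAlgebra σ R :=
  Ideal.Quotient.mk _ (X i)

lemma gen_sq (i : σ) : gen R i ^ 2 = 0 := by
  rw [gen, ← map_pow, Ideal.Quotient.eq_zero_iff_mem]
  exact Ideal.subset_span ⟨i, rfl⟩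

lemma prod_gen_ne_zero [Nontrivial R] (s : Finset σ) : ∏ i ∈ s, gen R i ≠ 0 := by
  classical
  have range_eq : (Set.range fun i : σ => (X i ^ 2 : MvPolynomial σ R)) =
      (fun e => monomial e (1 : R)) '' Set.range fun i : σ => Finsupp.single i 2 := by
    rw [← Set.range_comp]
    exact congrArg Set.range (funext fun i => X_pow_eq_monomial)
  have prod_eq : ∏ i ∈ s, (X i : MvPolynomial σ R) =
      monomial (∑ i ∈ s, Finsupp.single i 1) 1 :=
    (monomial_sum_one s _).symm
  simp only [gen]
  rw [← map_prod, Ne, Ideal.Quotient.eq_zero_iff_mem, range_eq, prod_eq,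
    mem_ideal_span_monomial_image]
  intro hdvd
  obtain ⟨_, ⟨i, rfl⟩, hle⟩ := hdvd (∑ i ∈ s, Finsupp.single i 1) (by simp [mem_support_iff])
  have two_le : 2 ≤ if i ∈ s then 1 else 0 := by
    simpa [Finsupp.finsetSum_apply, Finsupp.single_apply] using hle i
  grind

end SquareZeroAlgebra

end SquareZeroAlgebra

section CoordinateProjection

variable {ι S : Type*} [DecidableEq ι] [Semiring S]

variable (S) in
/-- The diagonal matrix projecting onto the coordinates in `P`. -/
def coordProj (P : Finset ι) : Matrix ι ι S :=
  diagonal fun i => if i ∈ P then 1 else 0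

lemma isSymm_coordProj (P : Finset ι) : (coordProj S P).IsSymm :=
  isSymm_diagonal _

variable [Fintype ι]

lemma coordProj_mul (P Q : Finset ι) : coordProj S P * coordProj S Q = coordProj S (P ∩ Q) := by
  simp only [coordProj, diagonal_mul_diagonal, Finset.mem_inter, ite_and, ite_mul, one_mul,
    zero_mul]

lemma isIdempotentElem_coordProj (P : Finset ι) : IsIdempotentElem (coordProj S P) := by
  rw [IsIdempotentElem, coordProj_mul, Finset.inter_self]

lemma trace_coordProj (P : Finset ι) : (coordProj S P).trace = P.card := by
  simp [coordProj]

end CoordinateProjection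

section CharpolyCoefficients

variable {ι S : Type*} [Fintype ι] [DecidableEq ι] [CommRing S]

lemma coeff_charpoly_mem {I : Ideal S} {A : Matrix ι ι S} (hA : ∀ i j, A i j ∈ I) {m : ℕ}
    (hm : m < Fintype.card ι) : A.charpoly.coeff m ∈ I :=
  Ideal.pow_le_self (Nat.sub_ne_zero_of_lt hm) (coeff_charpoly_mem_ideal_pow hA m)

lemma coeff_charpoly_smul_eq_zero {s : S} (hs : s ^ 2 = 0) {D : Matrix ι ι S} (hD : D.trace = 0)
    {m : ℕ} (hm : m < Fintype.card ι) : (s • D).charpoly.coeff m = 0 := by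
  rcases (Nat.succ_le_of_lt hm).eq_or_lt with trace_coeff | lower_coeff
  · have : Nonempty ι := Fintype.card_pos_iff.mp (Nat.zero_lt_of_lt hm)
    rw [show m = Fintype.card ι - 1 by omega, ← neg_eq_zero, ← trace_eq_neg_charpoly_coeff,
      trace_smul, hD, smul_zero]
  · have hmem : (s • D).charpoly.coeff m ∈ Ideal.span {s} ^ (Fintype.card ι - m) :=
      coeff_charpoly_mem_ideal_pow
        (fun i j => Ideal.mul_mem_right _ _ (Ideal.mem_span_singleton_self s)) m
    rwa [Ideal.span_singleton_pow, pow_eq_zero_of_le (by omega) hs, Ideal.span_singleton_zero,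
      Ideal.mem_bot] at hmem

/-- The semigroup of matrices that are square-zero multiples of the idempotent `D` or have all their
entries in `I`; it serves to contain the images of all words in the generic matrices. -/
def sqZeroMultiples (I : Ideal S) {D : Matrix ι ι S} (hD : IsIdempotentElem D) :
    Subsemigroup (Matrix ι ι S) where
  carrier := {A | (∃ s : S, s ^ 2 = 0 ∧ A = s • D) ∨ ∀ i j, A i j ∈ I}
  mul_mem' := by
    rintro A B hA (⟨t, ht, rfl⟩ | hB)
    · rcases hA with ⟨s, -, rfl⟩ | hA
      · exact .inl ⟨s * t, by rw [mul_pow, ht, mul_zero], by rw [smul_mul_smul_comm, hD.eq]⟩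
      · exact .inr fun i j => Ideal.sum_mem _ fun l _ => Ideal.mul_mem_right _ _ (hA i l)
    · exact .inr fun i j => Ideal.sum_mem _ fun l _ => Ideal.mul_mem_left _ _ (hB l j)

lemma coeff_charpoly_mem_of_mem_sqZeroMultiples {I : Ideal S} {D : Matrix ι ι S}
    {hD : IsIdempotentElem D} (hDtr : D.trace = 0) {A : Matrix ι ι S}
    (hA : A ∈ sqZeroMultiples I hD) {m : ℕ} (hm : m < Fintype.card ι) :
    A.charpoly.coeff m ∈ I := by
  rcases hA with ⟨s, hs, rfl⟩ | hA
  · rw [coeff_charpoly_smul_eq_zero hs hDtr hm]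
    exact I.zero_mem
  · exact coeff_charpoly_mem hA hm

end CharpolyCoefficients

lemma map_mem_of_mem_adjoin {σ R S : Type*} [CommSemiring R] [CommRing S] [Algebra R S]
    (φ : MvPolynomial σ R →ₐ[R] S) {I : Ideal S} {G : Set (MvPolynomial σ R)}
    (hφ : ∀ g ∈ G, φ g ∈ I) (hconst : ∀ g ∈ G, MvPolynomial.constantCoeff g = 0)
    {f : MvPolynomial σ R} (hf : f ∈ Algebra.adjoin R G)
    (hf0 : MvPolynomial.constantCoeff f = 0) : φ f ∈ I := by
  have hG : G.EqOn ((Ideal.Quotient.mkₐ R I).comp φ) (MvPolynomial.aeval 0) := fun g hg => by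
    simp [MvPolynomial.aeval_zero, hconst g hg, Ideal.Quotient.eq_zero_iff_mem.mpr (hφ g hg)]
  have hfI : (Ideal.Quotient.mkₐ R I).comp φ f = MvPolynomial.aeval 0 f :=
    AlgHom.adjoin_le_equalizer _ _ hG hf
  rwa [MvPolynomial.aeval_zero, hf0, map_zero, AlgHom.comp_apply, Ideal.Quotient.mkₐ_eq_mk,
    Ideal.Quotient.eq_zero_iff_mem] at hfI

lemma prod_ofFn_smul {S B : Type*} [CommSemiring S] [Semiring B] [Algebra S B] {m : ℕ}
    (a : Fin m → S) (b : Fin m → B) :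
    (List.ofFn fun k => a k • b k).prod = (∏ k, a k) • (List.ofFn b).prod := by
  induction m with
  | zero => simp
  | succ m ih => simp only [List.ofFn_succ, List.prod_cons, Fin.prod_univ_succ, ih,
      smul_mul_smul_comm]

lemma prod_ofFn_cons_const {M : Type*} [Monoid M] {x y : M} (hxy : x * y = x) (m : ℕ) :
    (List.ofFn (Fin.cons x fun _ => y : Fin (m + 1) → M)).prod = x := by
  have absorb_pow : x * y ^ m = x := by
    induction m with
    | zero => rw [pow_zero, mul_one]
    | succ m ih => rw [pow_succ, ← mul_assoc, ih, hxy]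
  simpa [List.ofFn_succ, List.ofFn_const] using absorb_pow

section Specialization

variable {𝔽 : Type} [Field 𝔽] {n d : ℕ} {S : Type*} [CommRing S]

lemma map_sigmaCoeff (φ : Rpoly 𝔽 n d →+* S) (t : ℕ)
    (A : Matrix (Fin n) (Fin n) (Rpoly 𝔽 n d)) :
    φ (sigmaCoeff t A) = (-1) ^ t * (φ.mapMatrix A).charpoly.coeff (n - t) := by
  rw [sigmaCoeff, RingHom.mapMatrix_apply, charpoly_map, Polynomial.coeff_map, map_mul, map_pow,
    map_neg, map_one]

lemma mapMatrix_prod_mem {φ : Rpoly 𝔽 n d →+* S}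
    (hsymm : ∀ k, (φ.mapMatrix (Xgen 𝔽 n d k)).IsSymm)
    {H : Subsemigroup (Matrix (Fin n) (Fin n) S)} (hH : ∀ k, φ.mapMatrix (Xgen 𝔽 n d k) ∈ H)
    {w : List (Matrix (Fin n) (Fin n) (Rpoly 𝔽 n d))} (hw : w ≠ [])
    (hgen : ∀ m ∈ w, (∃ k, m = Xgen 𝔽 n d k) ∨ (∃ k, m = (Xgen 𝔽 n d k)ᵀ)) :
    φ.mapMatrix w.prod ∈ H := by
  refine List.prod_induction_nonempty (φ.mapMatrix · ∈ H)
    (fun A B hA hB => by rw [map_mul]; exact H.mul_mem hA hB) hw fun m hm => ?_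
  rcases hgen m hm with ⟨k, rfl⟩ | ⟨k, rfl⟩
  · exact hH k
  · rw [RingHom.mapMatrix_apply, transpose_map, ← RingHom.mapMatrix_apply, (hsymm k).eq]
    exact hH k

lemma map_sigmaCoeff_prod_mem {φ : Rpoly 𝔽 n d →+* S}
    (hsymm : ∀ k, (φ.mapMatrix (Xgen 𝔽 n d k)).IsSymm)
    {I : Ideal S} {D : Matrix (Fin n) (Fin n) S} {hD : IsIdempotentElem D} (hDtr : D.trace = 0)
    (hφ : ∀ k, φ.mapMatrix (Xgen 𝔽 n d k) ∈ sqZeroMultiples I hD)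
    {w : List (Matrix (Fin n) (Fin n) (Rpoly 𝔽 n d))} (hw : w ≠ [])
    (hgen : ∀ m ∈ w, (∃ k, m = Xgen 𝔽 n d k) ∨ (∃ k, m = (Xgen 𝔽 n d k)ᵀ))
    {t : ℕ} (ht : 1 ≤ t) (htn : t ≤ n) : φ (sigmaCoeff t w.prod) ∈ I := by
  rw [map_sigmaCoeff]
  exact I.mul_mem_left _ (coeff_charpoly_mem_of_mem_sqZeroMultiples hDtr
    (mapMatrix_prod_mem hsymm hφ hw hgen) (by rw [Fintype.card_fin]; omega))

lemma constantCoeff_sigmaCoeff_prod {w : List (Matrix (Fin n) (Fin n) (Rpoly 𝔽 n d))}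
    (hw : w ≠ [])
    (hgen : ∀ m ∈ w, (∃ k, m = Xgen 𝔽 n d k) ∨ (∃ k, m = (Xgen 𝔽 n d k)ᵀ))
    {t : ℕ} (ht : 1 ≤ t) (htn : t ≤ n) :
    MvPolynomial.constantCoeff (sigmaCoeff t w.prod) = 0 := by
  have hX (k : Fin d) : (MvPolynomial.constantCoeff (R := 𝔽)).mapMatrix (Xgen 𝔽 n d k) = 0 := by
    ext i j
    simp [Xgen]
  refine (Submodule.mem_bot 𝔽).mp (map_sigmaCoeff_prod_mem (I := ⊥) (hD := .zero)
    (fun k => ?_) (trace_zero _ _) (fun k => ?_) hw hgen ht htn)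
  · rw [hX]
    exact isSymm_zero
  · rw [hX]
    exact .inr fun _ _ => Ideal.zero_mem _

variable [Algebra 𝔽 S]

lemma map_mem_of_mem_invO {φ : Rpoly 𝔽 n d →ₐ[𝔽] S}
    (hsymm : ∀ k, (φ.toRingHom.mapMatrix (Xgen 𝔽 n d k)).IsSymm)
    {I : Ideal S} {D : Matrix (Fin n) (Fin n) S} {hD : IsIdempotentElem D} (hDtr : D.trace = 0)
    (hφ : ∀ k, φ.toRingHom.mapMatrix (Xgen 𝔽 n d k) ∈ sqZeroMultiples I hD)
    {f : Rpoly 𝔽 n d} (hf : f ∈ invO 𝔽 n d) (hf0 : MvPolynomial.constantCoeff f = 0) :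
    φ f ∈ I := by
  refine map_mem_of_mem_adjoin φ ?_ ?_ hf hf0
  · rintro _ ⟨t, ht, htn, w, hw, hgen, rfl⟩
    exact map_sigmaCoeff_prod_mem (φ := φ.toRingHom) hsymm hDtr hφ hw hgen ht htn
  · rintro _ ⟨t, ht, htn, w, hw, hgen, rfl⟩
    exact constantCoeff_sigmaCoeff_prod hw hgen ht htn

lemma Decomposable.map_eq_zero {A : Subalgebra 𝔽 (Rpoly 𝔽 n d)} {φ : Rpoly 𝔽 n d →ₐ[𝔽] S}
    {I : Ideal S} (hI : I ^ 2 = ⊥)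
    (hA : ∀ f ∈ A, MvPolynomial.constantCoeff f = 0 → φ f ∈ I)
    {f : Rpoly 𝔽 n d} (hf : Decomposable 𝔽 A f) : φ f = 0 := by
  have pos_degree_mem {g : Rpoly 𝔽 n d} (hg : g ∈ A) :
      (∃ i, 0 < i ∧ g.IsHomogeneous i) → φ g ∈ I := fun ⟨i, hi, hgi⟩ =>
    hA g hg (hgi.coeff_eq_zero (by simpa using hi.ne))
  refine (Submodule.span_le (p := LinearMap.ker φ.toLinearMap)).mpr ?_ hf
  rintro _ ⟨g, hg, h, hh, hgpos, hhpos, rfl⟩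
  have hmem : φ g * φ h ∈ I ^ 2 :=
    sq I ▸ Ideal.mul_mem_mul (pos_degree_mem hg hgpos) (pos_degree_mem hh hhpos)
  simpa [hI] using hmem

variable (𝔽) in
/-- The substitution `X_k ↦ A_k` of concrete matrices for the generic ones. -/
def specialize (A : Fin d → Matrix (Fin n) (Fin n) S) : Rpoly 𝔽 n d →ₐ[𝔽] S :=
  MvPolynomial.aeval fun x => A x.2.2 x.1 x.2.1

lemma specialize_mapMatrix_Xgen (A : Fin d → Matrix (Fin n) (Fin n) S) (k : Fin d) :
    (specialize 𝔽 A).toRingHom.mapMatrix (Xgen 𝔽 n d k) = A k := by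
  ext i j
  simp [specialize, Xgen]

lemma specialize_trace_prod (A : Fin d → Matrix (Fin n) (Fin n) S) :
    specialize 𝔽 A (List.ofFn fun k => Xgen 𝔽 n d k).prod.trace = (List.ofFn A).prod.trace := by
  have hprod : (specialize 𝔽 A).toRingHom.mapMatrix (List.ofFn fun k => Xgen 𝔽 n d k).prod =
      (List.ofFn A).prod := by
    rw [map_list_prod, List.map_ofFn]
    exact congrArg (fun B => (List.ofFn B).prod) (funext (specialize_mapMatrix_Xgen A))
  rw [← hprod]
  exact AddMonoidHom.map_trace (specialize 𝔽 A).toRingHom.toAddMonoidHom _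

theorem not_decomposable_trace_prod_of_idempotent {m : ℕ} {a : Fin (m + 1) → S}
    (ha : ∀ k, a k ^ 2 = 0) (ha_prod : ∏ k, a k ≠ 0) {D E : Matrix (Fin n) (Fin n) S}
    (hD : IsIdempotentElem D) (hDsymm : D.IsSymm) (hDtr : D.trace = 0)
    (hEsymm : E.IsSymm) (hED : E * D = E) (hEtr : E.trace = 1) :
    ¬ Decomposable 𝔽 (invO 𝔽 n (m + 1))
      (List.ofFn fun k : Fin (m + 1) => Xgen 𝔽 n (m + 1) k).prod.trace := by
  intro hdec
  let B : Fin (m + 1) → Matrix (Fin n) (Fin n) S := Fin.cons E fun _ => D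
  let φ := specialize 𝔽 fun k => a k • B k
  have hBsymm (k : Fin (m + 1)) : (a k • B k).IsSymm := by
    cases k using Fin.cases with
    | zero => exact hEsymm.smul _
    | succ k => exact hDsymm.smul _
  have hBmem (k : Fin (m + 1)) : a k • B k ∈ sqZeroMultiples (Ideal.span {a 0}) hD := by
    cases k using Fin.cases with
    | zero => exact .inr fun i j => Ideal.mul_mem_right _ _ (Ideal.mem_span_singleton_self _)
    | succ k => exact .inl ⟨a k.succ, ha _, rfl⟩
  have hφ_zero : φ (List.ofFn fun k => Xgen 𝔽 n (m + 1) k).prod.trace = 0 := by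
    refine hdec.map_eq_zero (I := Ideal.span {a 0}) ?_ fun f hf hf0 =>
      map_mem_of_mem_invO (hD := hD) (fun k => ?_) hDtr (fun k => ?_) hf hf0
    · rw [Ideal.span_singleton_pow, ha, Ideal.span_singleton_zero]
    · rw [specialize_mapMatrix_Xgen]
      exact hBsymm k
    · rw [specialize_mapMatrix_Xgen]
      exact hBmem k
  refine ha_prod ?_
  rwa [specialize_trace_prod, prod_ofFn_smul, prod_ofFn_cons_const hED, trace_smul, hEtr,
    smul_eq_mul, mul_one] at hφ_zero

end Specialization

theorem trace_prod_gen_indecomposable_general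
    (𝔽 : Type) [Field 𝔽] (n d : ℕ) (hd : 1 ≤ d)
    (hp0 : 0 < ringChar 𝔽) (hpn : ringChar 𝔽 ≤ n) :
    ¬ Decomposable 𝔽 (invO 𝔽 n d)
      (Matrix.trace (List.ofFn (fun k : Fin d => Xgen 𝔽 n d k)).prod) := by
  obtain ⟨m, rfl⟩ := Nat.exists_eq_add_of_le' hd
  obtain ⟨P, -, hPcard⟩ : ∃ P ⊆ (Finset.univ : Finset (Fin n)), P.card = ringChar 𝔽 :=
    Finset.exists_subset_card_eq (by rwa [Finset.card_fin])
  obtain ⟨i, hiP⟩ : P.Nonempty := Finset.card_pos.mp (hPcard ▸ hp0)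
  let S := SquareZeroAlgebra (Fin (m + 1)) 𝔽
  have char_eq_zero : (ringChar 𝔽 : S) = 0 := by
    rw [← map_natCast (algebraMap 𝔽 S), ringChar.Nat.cast_ringChar, map_zero]
  refine not_decomposable_trace_prod_of_idempotent (D := coordProj S P) (E := coordProj S {i})
    (SquareZeroAlgebra.gen_sq 𝔽) (SquareZeroAlgebra.prod_gen_ne_zero 𝔽 _)
    (isIdempotentElem_coordProj P) (isSymm_coordProj P) ?_ (isSymm_coordProj {i}) ?_ ?_
  · rw [trace_coordProj, hPcard, char_eq_zero]
  · rw [coordProj_mul, Finset.singleton_inter_of_mem hiP]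
  · rw [trace_coordProj, Finset.card_singleton, Nat.cast_one]

theorem trace_prod_gen_indecomposable
    (𝔽 : Type) [Field 𝔽] [Infinite 𝔽] (n d : ℕ) (hn : 2 ≤ n) (hd : 1 ≤ d)
    (hp0 : 0 < ringChar 𝔽) (hpn : ringChar 𝔽 ≤ n) (hp2 : ringChar 𝔽 ≠ 2) :
    ¬ Decomposable 𝔽 (invO 𝔽 n d)
      (Matrix.trace (List.ofFn (fun k : Fin d => Xgen 𝔽 n d k)).prod) := by
  exact trace_prod_gen_indecomposable_general 𝔽 n d hd hp0 hpn

end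
end

section
/- Let 𝔽 be an infinite field of characteristic p with 0 < p ≤ n/2 and p ≠ 2, and let d ≥ 1 be even. Then the invariant tr(X₁⁻ X₂⁻ ⋯ X_d⁻) is indecomposable in the algebra R₋^{O(n)} of invariants of skew-symmetric matrices; that is, tr(X₁⁻⋯X_d⁻) does not lie in the 𝔽-span of products g·h with g, h ∈ R₋^{O(n)} homogeneous of positive degree. -/
open Matrix
noncomputable section

/-!
Specialise `X_k ↦ x_k A_k`, where the `x_k` are commuting scalars with `x_k² = 0` and
`x_1 ⋯ x_d ≠ 0`, and the `A_k` are skew-symmetric matrices over `𝔽`: for `k > 1` the matrix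
`A_k = B` is a direct sum of `p` copies of the `2 × 2` rotation `J` and a zero block, while
`A_1 = D` has a single copy of `J`.

Modulo `x_1`, a word in the `X_k⁻` becomes `c Bᵐ` with `c² = 0` and `m ≥ 1`. Its characteristic
polynomial is `Xⁿ - c tr(Bᵐ) Xⁿ⁻¹`, and `tr(Bᵐ) = p tr(Jᵐ) = 0`. So every invariant of positive
degree is sent into the ideal `(x_1)`, whose square is zero, and decomposable invariants are killed.
On the other hand `tr(X₁⁻ ⋯ X_d⁻)` is sent to `tr(D B^{d-1}) x_1 ⋯ x_d = ±2 x_1 ⋯ x_d ≠ 0`.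
-/

namespace SkewInvariants

open MvPolynomial (aeval constantCoeff)

section SquareZeroScalars

open Polynomial DualNumber TrivSqZeroExt

universe u

variable {R : Type*} [CommRing R]

theorem list_prod_map_smul {A ι : Type*} [Semiring A] [Algebra R A] (c : ι → R) (a : ι → A)
    (l : List ι) : (l.map fun i => c i • a i).prod = (l.map c).prod • (l.map a).prod := by
  induction l with
  | nil => simp
  | cons i l ih => simp only [List.map_cons, List.prod_cons, ih, smul_mul_smul_comm]

theorem list_prod_map_sq_eq_zero {ι : Type*} {c : ι → R} (hc : ∀ i, c i ^ 2 = 0) {l : List ι}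
    (hl : l ≠ []) : (l.map c).prod ^ 2 = 0 := by
  obtain ⟨i, hi⟩ := List.exists_mem_of_ne_nil l hl
  have hdvd : c i ^ 2 ∣ (l.map c).prod ^ 2 :=
    pow_dvd_pow_of_dvd (List.dvd_prod (List.mem_map_of_mem hi)) 2
  rwa [hc, zero_dvd_iff] at hdvd

theorem charpolyRev_smul_eq_one {ι : Type*} [Fintype ι] [DecidableEq ι] {c : R} (hc : c ^ 2 = 0)
    {M : Matrix ι ι R} (hM : M.trace = 0) : (c • M).charpolyRev = 1 := by
  have hsmul : 1 - (X : R[X]) • (c • M).map C = 1 + (-(X * C c)) • M.map C := by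
    ext1 i j
    simp only [Matrix.sub_apply, Matrix.add_apply, Matrix.smul_apply, map_apply, smul_eq_mul, C_mul]
    ring
  have hsq : (-(X * C c) : R[X]) ^ 2 = 0 := by
    rw [neg_sq, mul_pow, ← C_pow, hc, C_0, mul_zero]
  have htrace : (M.map (C : R →+* R[X])).trace = 0 := by
    rw [← AddMonoidHom.map_trace, hM, map_zero]
  rw [charpolyRev, hsmul, det_one_add_smul, hsq, htrace, zero_mul, mul_zero, add_zero, add_zero]

theorem charpoly_smul_eq_X_pow {ι : Type*} [Fintype ι] [DecidableEq ι] {c : R} (hc : c ^ 2 = 0)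
    {M : Matrix ι ι R} (hM : M.trace = 0) : (c • M).charpoly = X ^ Fintype.card ι := by
  nontriviality R
  rw [← reflect_reflect (N := Fintype.card ι) (p := (c • M).charpoly), ← reflect_one,
    ← charpolyRev_smul_eq_one hc hM, ← reverse_charpoly, reverse, charpoly_natDegree_eq_dim]

/-- The scalars `ε, y₀, …, y_{d-1}` of the dual numbers `R[ε]`: a family of square-zero scalars
extended by one more, in such a way that `fst` is reduction modulo the new one. -/
def epsCons {d : ℕ} (y : Fin d → R) : Fin (d + 1) → R[ε] :=
  Fin.cons ε fun k => inl (y k)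

variable {d : ℕ} {y : Fin d → R}

theorem epsCons_sq_eq_zero (hy : ∀ k, y k ^ 2 = 0) (k : Fin (d + 1)) : epsCons y k ^ 2 = 0 := by
  cases k using Fin.cases with
  | zero => exact eps_pow_two
  | succ k => rw [epsCons, Fin.cons_succ, inl_pow, hy, inl_zero]

theorem prod_epsCons (y : Fin d → R) : ∏ k, epsCons y k = inr (∏ k, y k) := by
  have hinl : ∏ k, (inl (y k) : R[ε]) = inl (∏ k, y k) := (map_prod (inlHom R R) y _).symm
  simp only [Fin.prod_univ_succ, epsCons, Fin.cons_zero, Fin.cons_succ, hinl]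
  ext <;> simp

theorem prod_epsCons_ne_zero (hy : ∏ k, y k ≠ 0) : ∏ k, epsCons y k ≠ 0 := by
  rwa [prod_epsCons, ← inr_zero, inr_injective.ne_iff]

theorem exists_algebra_sq_eq_zero_prod_ne_zero (R : Type u) [CommRing R] [Nontrivial R] (d : ℕ) :
    ∃ (T : Type u) (_ : CommRing T) (_ : Algebra R T) (y : Fin d → T),
      (∀ k, y k ^ 2 = 0) ∧ ∏ k, y k ≠ 0 := by
  induction d with
  | zero => exact ⟨R, inferInstance, inferInstance, 0, fun k => k.elim0, by simp⟩
  | succ d ih =>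
    obtain ⟨T, _, _, y, hy, hprod⟩ := ih
    exact ⟨T[ε], inferInstance, inferInstance, epsCons y, epsCons_sq_eq_zero hy,
      prod_epsCons_ne_zero hprod⟩

theorem mul_eq_zero_of_fst_eq_zero {a b : R[ε]} (ha : a.fst = 0) (hb : b.fst = 0) :
    a * b = 0 := by
  ext <;> simp [ha, hb]

end SquareZeroScalars

section SkewMatrices

variable {K ι κ : Type*} [CommRing K]

theorem transpose_conj_of_transpose_eq_neg [Fintype κ] (U : Matrix ι κ K) {A : Matrix κ κ K}
    (hA : Aᵀ = -A) : (U * A * Uᵀ)ᵀ = -(U * A * Uᵀ) := by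
  rw [transpose_mul, transpose_mul, transpose_transpose, hA, Matrix.neg_mul, Matrix.mul_neg,
    Matrix.mul_assoc]

section Conjugation

variable [Fintype ι] [Fintype κ] [DecidableEq κ] {U : Matrix ι κ K}

theorem conj_mul_conj (hU : Uᵀ * U = 1) (A A' : Matrix κ κ K) :
    U * A * Uᵀ * (U * A' * Uᵀ) = U * (A * A') * Uᵀ := by
  calc U * A * Uᵀ * (U * A' * Uᵀ)
      = U * A * (Uᵀ * U) * A' * Uᵀ := by simp only [Matrix.mul_assoc]
    _ = U * (A * A') * Uᵀ := by rw [hU, Matrix.mul_one, Matrix.mul_assoc U]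

theorem conj_pow_succ [DecidableEq ι] (hU : Uᵀ * U = 1) (A : Matrix κ κ K) (m : ℕ) :
    (U * A * Uᵀ) ^ (m + 1) = U * A ^ (m + 1) * Uᵀ := by
  induction m with
  | zero => simp
  | succ m ih => rw [pow_succ, ih, conj_mul_conj hU, ← pow_succ]

theorem trace_conj (hU : Uᵀ * U = 1) (A : Matrix κ κ K) : (U * A * Uᵀ).trace = A.trace := by
  rw [trace_mul_comm, ← Matrix.mul_assoc, hU, Matrix.one_mul]

variable (K) in
theorem exists_transpose_mul_self_eq_one (h : Fintype.card κ ≤ Fintype.card ι) :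
    ∃ U : Matrix ι κ K, Uᵀ * U = 1 := by
  classical
  obtain ⟨f⟩ := Function.Embedding.nonempty_of_card_le h
  refine ⟨(1 : Matrix ι ι K).submatrix id f, ?_⟩
  rw [transpose_submatrix, transpose_one, ← submatrix_mul _ _ f id f Function.bijective_id,
    Matrix.mul_one, submatrix_one f f.injective]

end Conjugation

section Symplectic

variable [DecidableEq κ]

variable (K) in
/-- The rotation by a right angle in the `i`-th coordinate plane, zero on the other planes, whereas
`Matrix.J` rotates all of them. -/
def planeRotation (i : κ) : Matrix (κ ⊕ κ) (κ ⊕ κ) K :=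
  fromBlocks 0 (-single i i 1) (single i i 1) 0

theorem transpose_planeRotation (i : κ) : (planeRotation K i)ᵀ = -planeRotation K i := by
  simp [planeRotation, fromBlocks_transpose, fromBlocks_neg]

variable [Fintype κ]

theorem J_pow_two_mul (m : ℕ) : J κ K ^ (2 * m) = (-1 : K) ^ m • 1 := by
  rw [pow_mul, sq, J_squared, ← neg_one_smul K (1 : Matrix (κ ⊕ κ) (κ ⊕ κ) K), smul_pow, one_pow]

theorem trace_J : (J κ K).trace = 0 := by
  simp [J, trace]

theorem trace_J_pow_eq_zero (hκ : (Fintype.card κ : K) = 0) (m : ℕ) : (J κ K ^ m).trace = 0 := by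
  obtain ⟨k, rfl | rfl⟩ := m.even_or_odd'
  · simp [J_pow_two_mul, trace_one, hκ]
  · simp [pow_succ, J_pow_two_mul, trace_J]

theorem trace_planeRotation_mul_J (i : κ) : (planeRotation K i * J κ K).trace = -2 := by
  norm_num [planeRotation, J, fromBlocks_multiply, trace, single_apply]

theorem trace_planeRotation_mul_J_pow (i : κ) (m : ℕ) :
    (planeRotation K i * J κ K ^ (2 * m + 1)).trace = (-1) ^ (m + 1) * 2 := by
  rw [pow_succ, J_pow_two_mul, smul_mul_assoc, Matrix.one_mul, Matrix.mul_smul, trace_smul,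
    trace_planeRotation_mul_J, smul_eq_mul]
  ring

end Symplectic

theorem exists_skew_pair [Fintype ι] [DecidableEq ι] {p : ℕ} (hp : 0 < p) (hpK : (p : K) = 0)
    (hpι : 2 * p ≤ Fintype.card ι) :
    ∃ B D : Matrix ι ι K, Bᵀ = -B ∧ Dᵀ = -D ∧ (∀ m, (B ^ (m + 1)).trace = 0) ∧
      ∀ m, (D * B ^ (2 * m + 1)).trace = (-1) ^ (m + 1) * 2 := by
  have hcard : Fintype.card (Fin p ⊕ Fin p) ≤ Fintype.card ι := by
    simpa [← two_mul] using hpι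
  obtain ⟨U, hU⟩ := exists_transpose_mul_self_eq_one K hcard
  refine ⟨U * J (Fin p) K * Uᵀ, U * planeRotation K ⟨0, hp⟩ * Uᵀ,
    transpose_conj_of_transpose_eq_neg U (J_transpose _ _),
    transpose_conj_of_transpose_eq_neg U (transpose_planeRotation _), fun m => ?_, fun m => ?_⟩
  · rw [conj_pow_succ hU, trace_conj hU, trace_J_pow_eq_zero (by simpa using hpK)]
  · rw [conj_pow_succ hU, conj_mul_conj hU, trace_conj hU, trace_planeRotation_mul_J_pow]

end SkewMatrices

section Specialization

variable {𝔽 : Type} [Field 𝔽] {n d : ℕ} {S : Type*} [CommRing S]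

theorem map_sigmaCoeff (φ : Rpoly 𝔽 n d →+* S) (t : ℕ)
    (M : Matrix (Fin n) (Fin n) (Rpoly 𝔽 n d)) :
    φ (sigmaCoeff t M) = (-1) ^ t * (M.map φ).charpoly.coeff (n - t) := by
  rw [sigmaCoeff, map_mul, map_pow, map_neg, map_one, charpoly_map, Polynomial.coeff_map]

variable [Algebra 𝔽 S]

/-- The substitution `X_k ↦ x_k A_k`, for matrices `A_k` over `𝔽` and scalars `x_k` in an
`𝔽`-algebra. -/
def specialize (A : Fin d → Matrix (Fin n) (Fin n) 𝔽) (x : Fin d → S) : Rpoly 𝔽 n d →ₐ[𝔽] S :=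
  aeval fun v => A v.2.2 v.1 v.2.1 • x v.2.2

variable {A : Fin d → Matrix (Fin n) (Fin n) 𝔽}

theorem map_XgenSkew_specialize (h2 : (2 : 𝔽) ≠ 0) (hA : ∀ k, (A k)ᵀ = -A k) (x : Fin d → S)
    (k : Fin d) :
    (XgenSkew 𝔽 n d k).map (specialize A x) = x k • (A k).map (algebraMap 𝔽 S) := by
  ext1 i j
  have hij : A k j i = -A k i j := congrFun (congrFun (hA k) i) j
  rcases lt_trichotomy j i with hlt | rfl | hlt
  · simp [XgenSkew, specialize, hlt, Algebra.smul_def, mul_comm]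
  · have hdiag : A k j j = 0 :=
      (mul_eq_zero_iff_left h2).1 (by linear_combination hij)
    simp [XgenSkew, hdiag]
  · simp [XgenSkew, specialize, hlt, hlt.not_gt, hij, Algebra.smul_def, mul_comm]

theorem map_word_specialize (h2 : (2 : 𝔽) ≠ 0) (hA : ∀ k, (A k)ᵀ = -A k) (x : Fin d → S)
    (w : List (Fin d)) :
    (w.map (XgenSkew 𝔽 n d)).prod.map (specialize A x) =
      (w.map x).prod • (w.map A).prod.map (algebraMap 𝔽 S) := by
  calc (w.map (XgenSkew 𝔽 n d)).prod.map (specialize A x)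
      = (w.map fun k => (XgenSkew 𝔽 n d k).map (specialize A x)).prod := by
        simpa [Function.comp_def] using
          map_list_prod (specialize A x).mapMatrix (w.map (XgenSkew 𝔽 n d))
    _ = (w.map fun k => x k • (A k).map (algebraMap 𝔽 S)).prod := by
        simp only [map_XgenSkew_specialize h2 hA]
    _ = (w.map x).prod • (w.map A).prod.map (algebraMap 𝔽 S) := by
        rw [list_prod_map_smul]
        congr 1
        simpa [Function.comp_def] using
          (map_list_prod (algebraMap 𝔽 S).mapMatrix (w.map A)).symm

theorem specialize_trace_word (h2 : (2 : 𝔽) ≠ 0) (hA : ∀ k, (A k)ᵀ = -A k) (x : Fin d → S)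
    (w : List (Fin d)) :
    specialize A x (w.map (XgenSkew 𝔽 n d)).prod.trace = (w.map A).prod.trace • (w.map x).prod := by
  rw [AddMonoidHom.map_trace, map_word_specialize h2 hA, trace_smul, ← AddMonoidHom.map_trace,
    smul_eq_mul, mul_comm, ← Algebra.smul_def]

theorem specialize_cons_trace_ofFn (h2 : (2 : 𝔽) ≠ 0) {D B : Matrix (Fin n) (Fin n) 𝔽}
    (hD : Dᵀ = -D) (hB : Bᵀ = -B) (x : Fin (d + 1) → S) :
    specialize (Fin.cons D fun _ => B) x (List.ofFn (XgenSkew 𝔽 n (d + 1))).prod.trace =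
      (D * B ^ d).trace • ∏ k, x k := by
  rw [List.ofFn_eq_map, specialize_trace_word h2 (Fin.cases hD fun _ => hB), ← List.ofFn_eq_map,
    ← List.ofFn_eq_map, List.prod_ofFn, List.ofFn_cons, List.prod_cons, List.ofFn_const,
    List.prod_replicate]

variable {B : Matrix (Fin n) (Fin n) 𝔽} {x : Fin d → S}

theorem specialize_const_sigmaCoeff_word_eq_zero (h2 : (2 : 𝔽) ≠ 0) (hB : Bᵀ = -B)
    (htrace : ∀ m, (B ^ (m + 1)).trace = 0) (hx : ∀ k, x k ^ 2 = 0) {t : ℕ} (ht : 1 ≤ t)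
    (htn : t ≤ n) {w : List (Fin d)} (hw : w ≠ []) :
    specialize (fun _ => B) x (sigmaCoeff t (w.map (XgenSkew 𝔽 n d)).prod) = 0 := by
  have hword : ((w.map fun _ => B).prod.map (algebraMap 𝔽 S)).trace = 0 := by
    obtain ⟨m, hm⟩ := Nat.exists_eq_succ_of_ne_zero (List.length_pos_iff.2 hw).ne'
    rw [← AddMonoidHom.map_trace, List.map_const', List.prod_replicate, hm, htrace, map_zero]
  rw [← RingHom.coe_coe, map_sigmaCoeff, RingHom.coe_coe, map_word_specialize h2 fun _ => hB,
    charpoly_smul_eq_X_pow (list_prod_map_sq_eq_zero hx hw) hword, Fintype.card_fin,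
    Polynomial.coeff_X_pow, if_neg (by omega), mul_zero]

theorem specialize_const_eq_algebraMap_constantCoeff (h2 : (2 : 𝔽) ≠ 0) (hB : Bᵀ = -B)
    (htrace : ∀ m, (B ^ (m + 1)).trace = 0) (hx : ∀ k, x k ^ 2 = 0) {f : Rpoly 𝔽 n d}
    (hf : f ∈ invOminus 𝔽 n d) :
    specialize (fun _ => B) x f = algebraMap 𝔽 S (constantCoeff f) := by
  have hconst : specialize (fun _ => B) (0 : Fin d → S) f = algebraMap 𝔽 S (constantCoeff f) := by
    simp [specialize, MvPolynomial.aeval_zero']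
  rw [← hconst]
  refine AlgHom.adjoin_le_equalizer (specialize (fun _ => B) x) (specialize (fun _ => B) 0) ?_ hf
  rintro _ ⟨t, ht, htn, W, hW, hgen, rfl⟩
  obtain ⟨w, rfl⟩ : W ∈ Set.range (List.map (XgenSkew 𝔽 n d)) := by
    rw [Set.range_list_map]
    exact fun M hM => (hgen M hM).imp fun _ => Eq.symm
  have hw : w ≠ [] := fun h => hW (by rw [h, List.map_nil])
  rw [specialize_const_sigmaCoeff_word_eq_zero h2 hB htrace hx ht htn hw,
    specialize_const_sigmaCoeff_word_eq_zero h2 hB htrace (fun _ => zero_pow two_ne_zero) ht htn hw]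

end Specialization

section DualNumbers

open DualNumber TrivSqZeroExt

variable {𝔽 : Type} [Field 𝔽] {n d : ℕ} {T : Type*} [CommRing T] [Algebra 𝔽 T]

theorem fst_specialize_cons_epsCons (D B : Matrix (Fin n) (Fin n) 𝔽) (y : Fin d → T)
    (f : Rpoly 𝔽 n (d + 1)) :
    (specialize (Fin.cons D fun _ => B) (epsCons y) f).fst =
      specialize (fun _ => B) (fun k => (epsCons y k).fst) f := by
  have hcomp : (fstHom 𝔽 T T).comp (specialize (Fin.cons D fun _ => B) (epsCons y)) =
      specialize (fun _ => B) (fun k => (epsCons y k).fst) := by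
    ext ⟨i, j, k⟩
    cases k using Fin.cases <;> simp [specialize, epsCons]
  exact DFunLike.congr_fun hcomp f

theorem map_eq_zero_of_decomposable {A : Subalgebra 𝔽 (Rpoly 𝔽 n d)}
    {φ : Rpoly 𝔽 n d →ₐ[𝔽] T[ε]}
    (hφ : ∀ g ∈ A, ∀ i, 0 < i → g.IsHomogeneous i → (φ g).fst = 0) {f : Rpoly 𝔽 n d}
    (hf : Decomposable 𝔽 A f) : φ f = 0 := by
  refine (Submodule.span_le.2 ?_ : _ ≤ LinearMap.ker φ.toLinearMap) hf
  rintro _ ⟨g, hg, h, hh, ⟨i, hi, hgi⟩, ⟨j, hj, hhj⟩, rfl⟩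
  simpa using mul_eq_zero_of_fst_eq_zero (hφ g hg i hi hgi) (hφ h hh j hj hhj)

theorem specialize_eq_zero_of_decomposable (h2 : (2 : 𝔽) ≠ 0) {B : Matrix (Fin n) (Fin n) 𝔽}
    (hB : Bᵀ = -B) (htrace : ∀ m, (B ^ (m + 1)).trace = 0) (D : Matrix (Fin n) (Fin n) 𝔽)
    {y : Fin d → T} (hy : ∀ k, y k ^ 2 = 0) {f : Rpoly 𝔽 n (d + 1)}
    (hf : Decomposable 𝔽 (invOminus 𝔽 n (d + 1)) f) :
    specialize (Fin.cons D fun _ => B) (epsCons y) f = 0 := by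
  refine map_eq_zero_of_decomposable (fun g hg i hi hgi => ?_) hf
  have hsq : ∀ k, (epsCons y k).fst ^ 2 = 0 := fun k => by
    rw [← fst_pow, epsCons_sq_eq_zero hy, fst_zero]
  have hcoeff : constantCoeff g = 0 := hgi.coeff_eq_zero (by simpa using hi.ne)
  rw [fst_specialize_cons_epsCons,
    specialize_const_eq_algebraMap_constantCoeff h2 hB htrace hsq hg, hcoeff, map_zero]

end DualNumbers

end SkewInvariants

open SkewInvariants in
theorem trace_prod_skew_indecomposable_general {𝔽 : Type} [Field 𝔽] {n d : ℕ} (hd : 1 ≤ d)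
    (hdeven : Even d) (hp0 : 0 < ringChar 𝔽) (hpn : 2 * ringChar 𝔽 ≤ n) (hp2 : ringChar 𝔽 ≠ 2) :
    ¬ Decomposable 𝔽 (invOminus 𝔽 n d)
      (Matrix.trace (List.ofFn (fun k : Fin d => XgenSkew 𝔽 n d k)).prod) := by
  intro hdec
  obtain ⟨m, rfl⟩ : ∃ m, d = 2 * m + 1 + 1 := by
    obtain ⟨r, rfl⟩ := hdeven
    exact ⟨r - 1, by omega⟩
  have h2 : (2 : 𝔽) ≠ 0 := Ring.two_ne_zero hp2
  obtain ⟨B, D, hB, hD, htraceB, htraceDB⟩ :=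
    exists_skew_pair hp0 ringChar.Nat.cast_ringChar (hpn.trans_eq (Fintype.card_fin n).symm)
  obtain ⟨T, _, _, y, hy, hprod⟩ := exists_algebra_sq_eq_zero_prod_ne_zero 𝔽 (2 * m + 1)
  have hzero := specialize_eq_zero_of_decomposable h2 hB htraceB D hy hdec
  rw [specialize_cons_trace_ofFn h2 hD hB, htraceDB] at hzero
  exact smul_ne_zero (mul_ne_zero (pow_ne_zero _ (neg_ne_zero.2 one_ne_zero)) h2)
    (prod_epsCons_ne_zero hprod) hzero

theorem trace_prod_skew_indecomposable
    (𝔽 : Type) [Field 𝔽] [Infinite 𝔽] (n d : ℕ) (hn : 2 ≤ n) (hd : 1 ≤ d) (hdeven : Even d)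
    (hp0 : 0 < ringChar 𝔽) (hpn : 2 * ringChar 𝔽 ≤ n) (hp2 : ringChar 𝔽 ≠ 2) :
    ¬ Decomposable 𝔽 (invOminus 𝔽 n d)
      (Matrix.trace (List.ofFn (fun k : Fin d => XgenSkew 𝔽 n d k)).prod) :=
  trace_prod_skew_indecomposable_general hd hdeven hp0 hpn hp2

end
end

section
/- Let 𝔽 be an infinite field of characteristic p with 0 < p ≤ n/2 and p ≠ 2, and let d ≥ 1. Suppose coefficients α_{σ,δ} ∈ 𝔽 are given for each permutation σ ∈ S_d and each tuple δ = (δ₁,…,δ_d) ∈ {1,T}^d, and suppose that the linear combination Σ_{σ,δ} α_{σ,δ} · tr(X_{σ(1)}^{δ₁} ⋯ X_{σ(d)}^{δ_d}) is decomposable in R^{O(n)} (i.e., lies in the 𝔽-span of products g·h with g, h ∈ R^{O(n)} homogeneous of positive degree). Then the sum of the coefficients over those terms whose tuple δ is constant vanishes: Σ_{σ ∈ S_d} ( α_{σ,(1,…,1)} + α_{σ,(T,…,T)} ) = 0. -/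
open Matrix
noncomputable section

/-!
Over an algebraic closure of `𝔽`, the inequality `2 * p ≤ n` and `p ≠ 2` provide `p` orthogonal
hyperbolic pairs in the standard quadratic space of dimension `n`, hence two totally isotropic
`p`-dimensional subspaces `U` and `U'` in duality. Substitute for each `X_k` a matrix acting on `U`
by a diagonal block `D_k`, so that `X_kᵀ` acts on `U'` by `D_k`. Words in the `X_k` and `X_kᵀ` with
non-constant `δ` then vanish, since one meets the product of the blocks of `U` and `U'`.

Take `D_k = x_k • 1` with an indeterminate `x_k`, except that for one index `k₀` only a single
diagonal entry of `D_k₀` is `x_k₀`, the others being zero. Modulo the ideal `J` generated by `x_k₀`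
and all `x_k ^ 2`, every word has characteristic polynomial `X ^ n`: a word avoiding `k₀` has a
scalar block `c • 1`, and `(X - c) ^ p = X ^ p - c ^ p` with `c ^ p ∈ J`. So homogeneous invariants
of positive degree map into `J`, and decomposable ones into `J ^ 2`, which lies in the ideal of the
squares `x_k ^ 2`. The given combination of traces maps to `c * ∏ k, x_k`, where `c` is the sum of
the coefficients with constant `δ`; hence `c = 0`.
-/

section HyperbolicFrame

/-- The columns of `W false` and of `W true` are dual bases of two totally isotropic submodules of
`T ^ ι` for the standard symmetric bilinear form, i.e. they form hyperbolic pairs. -/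
structure IsHyperbolicFrame {T ι κ : Type*} [CommRing T] [Fintype ι] [DecidableEq κ]
    (W : Bool → Matrix ι κ T) : Prop where
  dual (b : Bool) : (W !b)ᵀ * W b = 1
  isotropic (b : Bool) : (W b)ᵀ * W b = 0

theorem exists_isHyperbolicFrame {T ι κ : Type*} [CommRing T] [Fintype ι] [Fintype κ]
    [DecidableEq κ] (hcard : 2 * Fintype.card κ ≤ Fintype.card ι)
    (htwo : IsUnit (2 : T)) (hneg : IsSquare (-1 : T)) :
    ∃ W : Bool → Matrix ι κ T, IsHyperbolicFrame W := by
  classical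
  obtain ⟨e⟩ : Nonempty (κ ⊕ κ ↪ ι) :=
    Function.Embedding.nonempty_of_card_le (by rw [Fintype.card_sum]; omega)
  obtain ⟨half, hhalf⟩ := htwo.exists_right_inv
  obtain ⟨i, hi⟩ := hneg
  let E : Matrix ι (κ ⊕ κ) T := (1 : Matrix ι ι T).submatrix id e
  have hE : Eᵀ * E = 1 := by
    rw [transpose_submatrix, transpose_one, ← submatrix_mul _ _ _ _ _ Function.bijective_id,
      one_mul, submatrix_one_embedding]
  let V (a c : T) : Matrix ι κ T := E * fromRows (a • (1 : Matrix κ κ T)) (c • (1 : Matrix κ κ T))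
  have hV (a c a' c' : T) : (V a c)ᵀ * V a' c' = (a * a' + c * c') • 1 := by
    calc (V a c)ᵀ * V a' c'
        = fromCols (a • (1 : Matrix κ κ T)) (c • (1 : Matrix κ κ T)) * (Eᵀ * E) *
            fromRows (a' • (1 : Matrix κ κ T)) (c' • (1 : Matrix κ κ T)) := by
          simp only [V, transpose_mul, transpose_fromRows, transpose_smul, transpose_one,
            Matrix.mul_assoc]
      _ = (a * a' + c * c') • 1 := by
          rw [hE, Matrix.mul_one, fromCols_mul_fromRows]
          simp [smul_smul, add_smul, mul_comm]
  -- Orthonormal `e, f` give the hyperbolic pair `e - i f`, `(e + i f) / 2`.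
  refine ⟨fun b => if b then V half (half * i) else V 1 (-i), ⟨fun b => ?_, fun b => ?_⟩⟩
  · cases b <;> simp only [Bool.not_true, Bool.not_false, if_true, Bool.false_eq_true, if_false, hV]
    · rw [show half * 1 + half * i * -i = 1 by linear_combination hhalf + half * hi, one_smul]
    · rw [show 1 * half + -i * (half * i) = 1 by linear_combination hhalf + half * hi, one_smul]
  · cases b <;> simp only [if_true, Bool.false_eq_true, if_false, hV]
    · rw [show 1 * 1 + -i * -i = 0 by linear_combination -hi, zero_smul]
    · rw [show half * half + half * i * (half * i) = 0 by linear_combination -half ^ 2 * hi,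
        zero_smul]

variable {T ι κ : Type*} [CommRing T] [Fintype κ]

/-- For a hyperbolic frame `W`, the matrix acting as `M` on the columns of `W b` and as zero on the
vectors orthogonal to all columns of `W !b`. -/
def hyperbolicBlock (W : Bool → Matrix ι κ T) (b : Bool) (M : Matrix κ κ T) : Matrix ι ι T :=
  W b * M * (W !b)ᵀ

theorem transpose_hyperbolicBlock (W : Bool → Matrix ι κ T) (b : Bool) (M : Matrix κ κ T) :
    (hyperbolicBlock W b M)ᵀ = hyperbolicBlock W (!b) Mᵀ := by
  simp only [hyperbolicBlock, transpose_mul, transpose_transpose, Bool.not_not, Matrix.mul_assoc]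

namespace IsHyperbolicFrame

variable [Fintype ι] [DecidableEq κ] {W : Bool → Matrix ι κ T}

theorem hyperbolicBlock_mul (hW : IsHyperbolicFrame W) (b : Bool) (M N : Matrix κ κ T) :
    hyperbolicBlock W b M * hyperbolicBlock W b N = hyperbolicBlock W b (M * N) := by
  calc hyperbolicBlock W b M * hyperbolicBlock W b N
      = W b * M * ((W !b)ᵀ * W b) * N * (W !b)ᵀ := by
        simp only [hyperbolicBlock, Matrix.mul_assoc]
    _ = hyperbolicBlock W b (M * N) := by
        rw [hW.dual, Matrix.mul_one, hyperbolicBlock, Matrix.mul_assoc (W b)]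

theorem hyperbolicBlock_mul_not (hW : IsHyperbolicFrame W) (b : Bool) (M N : Matrix κ κ T) :
    hyperbolicBlock W b M * hyperbolicBlock W (!b) N = 0 := by
  calc hyperbolicBlock W b M * hyperbolicBlock W (!b) N
      = W b * M * ((W !b)ᵀ * W !b) * N * (W !!b)ᵀ := by
        simp only [hyperbolicBlock, Matrix.mul_assoc]
    _ = 0 := by rw [hW.isotropic, Matrix.mul_zero, Matrix.zero_mul, Matrix.zero_mul]

theorem trace_hyperbolicBlock (hW : IsHyperbolicFrame W) (b : Bool) (M : Matrix κ κ T) :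
    (hyperbolicBlock W b M).trace = M.trace := by
  rw [hyperbolicBlock, trace_mul_comm, ← Matrix.mul_assoc, hW.dual, Matrix.one_mul]

theorem card_le_card [Nontrivial T] (hW : IsHyperbolicFrame W) : Fintype.card κ ≤ Fintype.card ι :=
  calc Fintype.card κ
      = ((W !false)ᵀ * W false).rank := by rw [hW.dual, rank_one]
    _ ≤ (W !false)ᵀ.rank := rank_mul_le_left _ _
    _ ≤ Fintype.card ι := rank_le_card_width _

theorem charpoly_hyperbolicBlock [Nontrivial T] [DecidableEq ι] (hW : IsHyperbolicFrame W)
    (b : Bool) (M : Matrix κ κ T) :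
    (hyperbolicBlock W b M).charpoly =
      Polynomial.X ^ (Fintype.card ι - Fintype.card κ) * M.charpoly := by
  rw [hyperbolicBlock, Matrix.mul_assoc, charpoly_mul_comm_of_le _ _ hW.card_le_card,
    Matrix.mul_assoc, hW.dual, Matrix.mul_one]

variable {ν : Type*} [DecidableEq ι]

theorem prod_map_hyperbolicBlock (hW : IsHyperbolicFrame W) (D : ν → Matrix κ κ T)
    {b : Bool} {l : List (Bool × ν)} (hl : l ≠ []) (hb : ∀ y ∈ l, y.1 = b) :
    (l.map fun y => hyperbolicBlock W y.1 (D y.2)).prod =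
      hyperbolicBlock W b ((l.map Prod.snd).map D).prod := by
  induction l, hl using List.recNeNil with
  | singleton y => simp [hb y]
  | cons y l _ ih =>
    rw [List.forall_mem_cons] at hb
    rw [List.map_cons, List.prod_cons, ih hb.2, hb.1, hW.hyperbolicBlock_mul]
    simp only [List.map_cons, List.prod_cons]

theorem prod_map_hyperbolicBlock_eq_zero (hW : IsHyperbolicFrame W) (D : ν → Matrix κ κ T)
    {l : List (Bool × ν)} (hl : ∀ b, ∃ y ∈ l, y.1 ≠ b) :
    (l.map fun y => hyperbolicBlock W y.1 (D y.2)).prod = 0 := by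
  induction l with
  | nil => simp at hl
  | cons y l ih =>
    rw [List.map_cons, List.prod_cons]
    by_cases hconst : ∃ b, ∀ z ∈ l, z.1 = b
    · obtain ⟨b, hb⟩ := hconst
      obtain ⟨z, hz, hzy⟩ : ∃ z ∈ l, z.1 ≠ y.1 := by simpa using hl y.1
      have hby : b = !y.1 := Bool.eq_not.mpr (hb z hz ▸ hzy)
      rw [hW.prod_map_hyperbolicBlock D (List.ne_nil_of_mem hz) hb, hby, hW.hyperbolicBlock_mul_not]
    · push Not at hconst
      rw [ih hconst, mul_zero]

end IsHyperbolicFrame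

end HyperbolicFrame

section MarkedDiagonal

theorem prod_map_diagonal {T ν κ : Type*} [CommSemiring T] [Fintype κ] [DecidableEq κ]
    (v : ν → κ → T) (l : List ν) :
    (l.map fun k => diagonal (v k)).prod = diagonal (l.map v).prod := by
  change _ = diagonalRingHom κ T (l.map v).prod
  rw [map_list_prod, List.map_map]
  rfl

variable {T ν κ : Type*} [CommRing T] [DecidableEq ν] [DecidableEq κ]

/-- The diagonals `x k • 1` for `k ≠ k₀`, and the diagonal with the single nonzero entry `x k₀`
in position `j₀` for `k = k₀`. Products that avoid `k₀` are scalar, so in characteristic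
`Fintype.card κ` their characteristic polynomials only involve powers of the scalar, while the
product of all of them has trace `∏ k, x k`. -/
def markedDiagonal (x : ν → T) (k₀ : ν) (j₀ : κ) (k : ν) : κ → T :=
  x k • (Pi.mulSingle k₀ (Pi.single j₀ 1) : ν → κ → T) k

variable (x : ν → T) (k₀ : ν) (j₀ : κ)

theorem dvd_list_prod_markedDiagonal {k : ν} {l : List ν} (hk : k ∈ l) (j : κ) :
    x k ∣ (l.map (markedDiagonal x k₀ j₀)).prod j := by
  have hdvd := map_dvd (Pi.evalMonoidHom (fun _ : κ => T) j)
    (List.dvd_prod (List.mem_map_of_mem (f := markedDiagonal x k₀ j₀) hk))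
  exact (Dvd.intro _ rfl).trans hdvd

theorem list_prod_markedDiagonal_of_notMem {l : List ν} (hk₀ : k₀ ∉ l) :
    (l.map (markedDiagonal x k₀ j₀)).prod = fun _ => (l.map x).prod := by
  induction l with
  | nil => rfl
  | cons k l ih =>
    rw [List.mem_cons, not_or] at hk₀
    ext j
    simp [ih hk₀.2, markedDiagonal, Pi.mulSingle_eq_of_ne' hk₀.1]

theorem sum_prod_markedDiagonal [Fintype ν] [Fintype κ] :
    ∑ j, (∏ k, markedDiagonal x k₀ j₀ k) j = ∏ k, x k := by
  simp only [markedDiagonal, Finset.prod_smul, Finset.prod_pi_mulSingle', Finset.mem_univ,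
    if_true, Pi.smul_apply, smul_eq_mul]
  rw [← Finset.mul_sum, Finset.sum_pi_single', if_pos (Finset.mem_univ j₀), mul_one]

variable {Q : Type*} [CommRing Q] [Fintype κ] {x k₀} {π : T →+* Q}

theorem map_charpoly_diagonal_list_prod_markedDiagonal [Fact (Fintype.card κ).Prime]
    [CharP T (Fintype.card κ)] (hk₀ : π (x k₀) = 0) (hsq : ∀ k, π (x k) ^ 2 = 0)
    {l : List ν} (hl : l ≠ []) :
    (diagonal (l.map (markedDiagonal x k₀ j₀)).prod).charpoly.map π =
      Polynomial.X ^ Fintype.card κ := by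
  rw [charpoly_diagonal]
  by_cases hmem : k₀ ∈ l
  · have hzero (j : κ) : π ((l.map (markedDiagonal x k₀ j₀)).prod j) = 0 :=
      zero_dvd_iff.mp (hk₀ ▸ map_dvd π (dvd_list_prod_markedDiagonal x k₀ j₀ hmem j))
    simp [Polynomial.map_prod, hzero]
  · obtain ⟨k, hk⟩ := List.exists_mem_of_ne_nil l hl
    have hpow : π ((l.map x).prod ^ Fintype.card κ) = 0 := by
      have hdvd : x k ^ 2 ∣ (l.map x).prod ^ Fintype.card κ :=
        (pow_dvd_pow_of_dvd (List.dvd_prod (List.mem_map_of_mem hk)) 2).trans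
          (pow_dvd_pow _ (Fact.out : (Fintype.card κ).Prime).two_le)
      exact zero_dvd_iff.mp (by simpa only [map_pow, hsq] using map_dvd π hdvd)
    rw [list_prod_markedDiagonal_of_notMem x k₀ j₀ hmem, Finset.prod_const, Finset.card_univ,
      sub_pow_char, ← map_pow, Polynomial.map_sub, Polynomial.map_C, hpow, map_zero, sub_zero,
      Polynomial.map_pow, Polynomial.map_X]

end MarkedDiagonal

section HyperbolicPoint

/-- The letters `A k`, indexed by `(false, k)`, and `(A k)ᵀ`, indexed by `(true, k)`, of words in
matrices and their transposes. -/
def letter {T ι ν : Type*} (A : ν → Matrix ι ι T) (y : Bool × ν) : Matrix ι ι T :=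
  if y.1 then (A y.2)ᵀ else A y.2

variable {T ι κ ν : Type*} [CommRing T] [Fintype κ] [DecidableEq κ] [DecidableEq ν]

/-- The family of matrices at which the generic matrices are evaluated: the diagonals
`markedDiagonal x k₀ j₀` placed in the block of `W false`. -/
def hyperbolicPoint (W : Bool → Matrix ι κ T) (x : ν → T) (k₀ : ν) (j₀ : κ) (k : ν) :
    Matrix ι ι T :=
  hyperbolicBlock W false (diagonal (markedDiagonal x k₀ j₀ k))

theorem letter_hyperbolicPoint (W : Bool → Matrix ι κ T) (x : ν → T) (k₀ : ν) (j₀ : κ) :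
    letter (hyperbolicPoint W x k₀ j₀) =
      fun y => hyperbolicBlock W y.1 (diagonal (markedDiagonal x k₀ j₀ y.2)) := by
  ext ⟨b, k⟩ : 1
  cases b
  · rfl
  · exact (transpose_hyperbolicBlock ..).trans (by rw [diagonal_transpose, Bool.not_false])

namespace IsHyperbolicFrame

variable [Fintype ι] [DecidableEq ι] {W : Bool → Matrix ι κ T}

theorem map_charpoly_prod_letter_hyperbolicPoint [Fact (Fintype.card κ).Prime]
    [CharP T (Fintype.card κ)] (hW : IsHyperbolicFrame W) {Q : Type*} [CommRing Q] {π : T →+* Q}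
    {x : ν → T} {k₀ : ν} (hk₀ : π (x k₀) = 0) (hsq : ∀ k, π (x k) ^ 2 = 0) (j₀ : κ)
    {l : List (Bool × ν)} (hl : l ≠ []) :
    (l.map (letter (hyperbolicPoint W x k₀ j₀))).prod.charpoly.map π =
      Polynomial.X ^ Fintype.card ι := by
  have : Nontrivial T := CharP.nontrivial_of_char_ne_one (Fact.out : (Fintype.card κ).Prime).ne_one
  rw [letter_hyperbolicPoint]
  by_cases hconst : ∃ b, ∀ y ∈ l, y.1 = b
  · obtain ⟨b, hb⟩ := hconst
    rw [hW.prod_map_hyperbolicBlock (fun k => diagonal (markedDiagonal x k₀ j₀ k)) hl hb,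
      hW.charpoly_hyperbolicBlock, prod_map_diagonal, Polynomial.map_mul,
      map_charpoly_diagonal_list_prod_markedDiagonal j₀ hk₀ hsq (by simpa using hl),
      Polynomial.map_pow, Polynomial.map_X, ← pow_add, Nat.sub_add_cancel hW.card_le_card]
  · push Not at hconst
    rw [hW.prod_map_hyperbolicBlock_eq_zero (fun k => diagonal (markedDiagonal x k₀ j₀ k)) hconst,
      charpoly_zero, Polynomial.map_pow, Polynomial.map_X]

variable {d : ℕ} (x : Fin d → T) (k₀ : Fin d) (j₀ : κ) (σ : Equiv.Perm (Fin d))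

theorem trace_prod_letter_hyperbolicPoint_const (hW : IsHyperbolicFrame W) (b : Bool) :
    (List.ofFn fun i => letter (hyperbolicPoint W x k₀ j₀) (b, σ i)).prod.trace = ∏ k, x k := by
  have hne : List.ofFn (fun i => (b, σ i)) ≠ [] := by
    rw [Ne, List.ofFn_eq_nil_iff]
    exact (Fin.pos k₀).ne'
  have hprod := hW.prod_map_hyperbolicBlock (fun k => diagonal (markedDiagonal x k₀ j₀ k)) hne
    (b := b) (by simp)
  rw [← letter_hyperbolicPoint, prod_map_diagonal, List.map_ofFn, List.map_ofFn,
    List.map_ofFn, List.prod_ofFn] at hprod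
  calc _ = ∑ j, (∏ i, markedDiagonal x k₀ j₀ (σ i)) j := by
        rw [← trace_diagonal, ← hW.trace_hyperbolicBlock b]
        exact congrArg trace hprod
    _ = ∏ k, x k := by
        rw [Equiv.prod_comp σ (markedDiagonal x k₀ j₀), sum_prod_markedDiagonal]

theorem trace_prod_letter_hyperbolicPoint_eq_zero (hW : IsHyperbolicFrame W) {δ : Fin d → Bool}
    (hδ : δ ∉ Set.range (Function.const (Fin d))) :
    (List.ofFn fun i => letter (hyperbolicPoint W x k₀ j₀) (δ i, σ i)).prod.trace = 0 := by
  have hmixed (b : Bool) : ∃ y ∈ List.ofFn (fun i => (δ i, σ i)), y.1 ≠ b := by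
    by_contra! hb
    exact hδ ⟨b, funext fun i => (hb (δ i, σ i) (List.mem_ofFn.mpr ⟨i, rfl⟩)).symm⟩
  have hprod := hW.prod_map_hyperbolicBlock_eq_zero
    (fun k => diagonal (markedDiagonal x k₀ j₀ k)) hmixed
  rw [← letter_hyperbolicPoint, List.map_ofFn] at hprod
  exact (congrArg trace hprod).trans (trace_zero _ _)

theorem sum_smul_trace_prod_letter_hyperbolicPoint {F : Type*} [CommSemiring F] [Algebra F T]
    (hW : IsHyperbolicFrame W) (α : Equiv.Perm (Fin d) → (Fin d → Bool) → F) :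
    ∑ σ, ∑ δ, α σ δ •
        (List.ofFn fun i => letter (hyperbolicPoint W x k₀ j₀) (δ i, σ i)).prod.trace =
      (∑ σ, (α σ (fun _ => false) + α σ (fun _ => true))) • ∏ k, x k := by
  have : Nonempty (Fin d) := ⟨k₀⟩
  rw [Finset.sum_smul]
  refine Finset.sum_congr rfl fun σ _ => ?_
  rw [← Fintype.sum_of_injective (Function.const (Fin d)) Function.const_injective
    (fun b => α σ (Function.const _ b) • ∏ k, x k)]
  · rw [Fintype.sum_bool, add_comm, ← add_smul]
    rfl
  · intro δ hδ
    rw [hW.trace_prod_letter_hyperbolicPoint_eq_zero x k₀ j₀ σ hδ, smul_zero]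
  · intro b
    simp only [Function.const_apply, hW.trace_prod_letter_hyperbolicPoint_const x k₀ j₀ σ b]

end IsHyperbolicFrame

end HyperbolicPoint

section Evaluation

variable {𝔽 : Type} [Field 𝔽] {n d : ℕ} {T : Type*} [CommRing T] [Algebra 𝔽 T]

/-- The substitution `X_k ↦ A k`. -/
def evalGeneric (A : Fin d → Matrix (Fin n) (Fin n) T) : Rpoly 𝔽 n d →ₐ[𝔽] T :=
  MvPolynomial.aeval fun ijk => A ijk.2.2 ijk.1 ijk.2.1

theorem letter_Xgen_map_evalGeneric (A : Fin d → Matrix (Fin n) (Fin n) T) (y : Bool × Fin d) :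
    (letter (Xgen 𝔽 n d) y).map (evalGeneric A) = letter A y := by
  obtain ⟨b, k⟩ := y
  cases b <;> ext i j <;> simp [letter, Xgen, evalGeneric]

theorem prod_letter_Xgen_map_evalGeneric (A : Fin d → Matrix (Fin n) (Fin n) T)
    (l : List (Bool × Fin d)) :
    (l.map (letter (Xgen 𝔽 n d))).prod.map (evalGeneric A) = (l.map (letter A)).prod := by
  have hmap := map_list_prod (evalGeneric A).mapMatrix (l.map (letter (Xgen 𝔽 n d)))
  rw [List.map_map] at hmap
  exact hmap.trans (congrArg _ (List.map_congr_left fun y _ => letter_Xgen_map_evalGeneric A y))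

theorem evalGeneric_trace_prod_ofFn (A : Fin d → Matrix (Fin n) (Fin n) T) {m : ℕ}
    (δ : Fin m → Bool) (s : Fin m → Fin d) :
    evalGeneric A (List.ofFn fun i =>
        if δ i then (Xgen 𝔽 n d (s i))ᵀ else Xgen 𝔽 n d (s i)).prod.trace =
      (List.ofFn fun i => letter A (δ i, s i)).prod.trace := by
  have hword := prod_letter_Xgen_map_evalGeneric (𝔽 := 𝔽) A (List.ofFn fun i => (δ i, s i))
  rw [List.map_ofFn, List.map_ofFn] at hword
  rw [AddMonoidHom.map_trace]
  exact congrArg trace hword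

theorem evalGeneric_sigmaCoeff_prod_letter (A : Fin d → Matrix (Fin n) (Fin n) T) (t : ℕ)
    (l : List (Bool × Fin d)) :
    evalGeneric A (sigmaCoeff t (l.map (letter (Xgen 𝔽 n d))).prod) =
      (-1) ^ t * (l.map (letter A)).prod.charpoly.coeff (n - t) := by
  rw [sigmaCoeff, map_mul, map_pow, map_neg, map_one,
    ← prod_letter_Xgen_map_evalGeneric (𝔽 := 𝔽) A l]
  congr 1
  change (evalGeneric A).toRingHom _ = _
  rw [← Polynomial.coeff_map, ← charpoly_map]
  rfl

theorem evalGeneric_zero_eq_zero {g : Rpoly 𝔽 n d} {i : ℕ} (hi : 0 < i) (hg : g.IsHomogeneous i) :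
    evalGeneric (0 : Fin d → Matrix (Fin n) (Fin n) 𝔽) g = 0 := by
  have hcoeff : MvPolynomial.coeff 0 g = 0 := hg.coeff_eq_zero (by simpa using hi.ne)
  calc _ = MvPolynomial.constantCoeff g := MvPolynomial.aeval_zero' g
    _ = 0 := hcoeff

theorem exists_list_map_letter_Xgen {w : List (Matrix (Fin n) (Fin n) (Rpoly 𝔽 n d))}
    (hw : ∀ m ∈ w, (∃ k, m = Xgen 𝔽 n d k) ∨ (∃ k, m = (Xgen 𝔽 n d k)ᵀ)) :
    ∃ l : List (Bool × Fin d), l.map (letter (Xgen 𝔽 n d)) = w := by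
  rw [← Set.mem_range, Set.range_list_map]
  intro m hm
  rcases hw m hm with ⟨k, rfl⟩ | ⟨k, rfl⟩
  · exact ⟨(false, k), rfl⟩
  · exact ⟨(true, k), rfl⟩

theorem evalGeneric_zero_sigmaCoeff {t : ℕ} (ht : 1 ≤ t) (htn : t ≤ n)
    {l : List (Bool × Fin d)} (hl : l ≠ []) :
    evalGeneric (0 : Fin d → Matrix (Fin n) (Fin n) 𝔽)
      (sigmaCoeff t (l.map (letter (Xgen 𝔽 n d))).prod) = 0 := by
  obtain ⟨y, l, rfl⟩ := List.exists_cons_of_ne_nil hl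
  rw [evalGeneric_sigmaCoeff_prod_letter, List.map_cons, List.prod_cons]
  simp [letter, Polynomial.coeff_X_pow, show n - t ≠ n by omega]

theorem evalGeneric_sigmaCoeff_mem {A : Fin d → Matrix (Fin n) (Fin n) T} {J : Ideal T}
    {l : List (Bool × Fin d)}
    (hA : (l.map (letter A)).prod.charpoly.map (Ideal.Quotient.mk J) = Polynomial.X ^ n)
    {t : ℕ} (ht : 1 ≤ t) (htn : t ≤ n) :
    evalGeneric A (sigmaCoeff t (l.map (letter (Xgen 𝔽 n d))).prod) ∈ J := by
  rw [evalGeneric_sigmaCoeff_prod_letter]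
  refine J.mul_mem_left _ (Ideal.Quotient.eq_zero_iff_mem.mp ?_)
  rw [← Polynomial.coeff_map, hA, Polynomial.coeff_X_pow, if_neg (by omega)]

theorem evalGeneric_mem_of_mem_invO {A : Fin d → Matrix (Fin n) (Fin n) T} {J : Ideal T}
    (hA : ∀ l : List (Bool × Fin d), l ≠ [] →
      (l.map (letter A)).prod.charpoly.map (Ideal.Quotient.mk J) = Polynomial.X ^ n)
    {g : Rpoly 𝔽 n d} (hg : g ∈ invO 𝔽 n d) {i : ℕ} (hi : 0 < i) (hgi : g.IsHomogeneous i) :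
    evalGeneric A g ∈ J := by
  let ψ : Rpoly 𝔽 n d →ₐ[𝔽] T ⧸ J := (Ideal.Quotient.mkₐ 𝔽 J).comp (evalGeneric A)
  let ε : Rpoly 𝔽 n d →ₐ[𝔽] T ⧸ J := (Algebra.ofId 𝔽 _).comp (evalGeneric 0)
  have hψε : invO 𝔽 n d ≤ AlgHom.equalizer ψ ε := by
    refine AlgHom.adjoin_le_equalizer _ _ ?_
    rintro _ ⟨t, ht, htn, w, hw, hletters, rfl⟩
    obtain ⟨l, rfl⟩ := exists_list_map_letter_Xgen hletters
    have hl : l ≠ [] := by simpa using hw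
    have hψ : ψ (sigmaCoeff t (l.map (letter (Xgen 𝔽 n d))).prod) = 0 :=
      Ideal.Quotient.eq_zero_iff_mem.mpr (evalGeneric_sigmaCoeff_mem (hA l hl) ht htn)
    rw [hψ, AlgHom.comp_apply, evalGeneric_zero_sigmaCoeff ht htn hl, map_zero]
  have hψ : ψ g = 0 := by
    rw [show ψ g = ε g from hψε hg, AlgHom.comp_apply, evalGeneric_zero_eq_zero hi hgi, map_zero]
  exact Ideal.Quotient.eq_zero_iff_mem.mp hψ

theorem Decomposable.map_mem_mul {A : Subalgebra 𝔽 (Rpoly 𝔽 n d)} {f : Rpoly 𝔽 n d}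
    (hf : Decomposable 𝔽 A f) {φ : Rpoly 𝔽 n d →ₐ[𝔽] T} {J : Ideal T}
    (hJ : ∀ g ∈ A, ∀ i, 0 < i → g.IsHomogeneous i → φ g ∈ J) : φ f ∈ J * J := by
  suffices h : f ∈ ((J * J).restrictScalars 𝔽).comap φ.toLinearMap from h
  refine Submodule.span_le.mpr ?_ hf
  rintro _ ⟨g, hg, h, hh, ⟨i, hi, hgi⟩, ⟨j, hj, hhj⟩, rfl⟩
  rw [SetLike.mem_coe, Submodule.mem_comap, AlgHom.toLinearMap_apply, map_mul]
  exact Ideal.mul_mem_mul (hJ g hg i hi hgi) (hJ h hh j hj hhj)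

end Evaluation

section SquareIdeal

open MvPolynomial

/-- The ideal of `K[x]` generated by the squares of the variables. -/
def squareIdeal (K ν : Type*) [CommSemiring K] : Ideal (MvPolynomial ν K) :=
  Ideal.span (Set.range fun k => X k ^ 2)

variable {K ν : Type*} [CommSemiring K]

theorem X_pow_two_mem_squareIdeal (k : ν) : (X k ^ 2 : MvPolynomial ν K) ∈ squareIdeal K ν :=
  Ideal.subset_span ⟨k, rfl⟩

theorem sup_span_X_mul_self_le_squareIdeal (k : ν) :
    (squareIdeal K ν ⊔ Ideal.span {X k}) * (squareIdeal K ν ⊔ Ideal.span {X k}) ≤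
      squareIdeal K ν := by
  rw [Ideal.sup_mul, Ideal.mul_sup, Ideal.mul_sup, Ideal.span_singleton_mul_span_singleton]
  refine sup_le (sup_le Ideal.mul_le_left Ideal.mul_le_left) (sup_le Ideal.mul_le_right ?_)
  rw [Ideal.span_singleton_le_iff_mem, ← pow_two]
  exact X_pow_two_mem_squareIdeal k

theorem eq_zero_of_C_mul_prod_X_mem_squareIdeal [Fintype ν] {c : K}
    (hc : C c * ∏ k, X k ∈ squareIdeal K ν) : c = 0 := by
  classical
  by_contra hne
  have hmon : C c * ∏ k : ν, X k = monomial (∑ k, Finsupp.single k 1) c := by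
    rw [← mul_one c, ← C_mul_monomial, monomial_sum_one, mul_one]
    rfl
  have hspan : squareIdeal K ν = Ideal.span
      ((fun s => monomial s (1 : K)) '' Set.range fun k => Finsupp.single k 2) := by
    simp only [squareIdeal, ← Set.range_comp, Function.comp_def, X_pow_eq_monomial]
  rw [hmon, hspan, mem_ideal_span_monomial_image] at hc
  obtain ⟨_, ⟨k, rfl⟩, hk⟩ := hc (∑ k, Finsupp.single k 1) (by simp [mem_support_iff, hne])
  simpa [Finsupp.finsetSum_apply, Finsupp.single_apply] using hk k

end SquareIdeal

theorem IsHyperbolicFrame.evalGeneric_mem_squareIdeal {𝔽 : Type} [Field 𝔽] {K : Type*}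
    [CommRing K] [Algebra 𝔽 K] {p : ℕ} [Fact p.Prime] [CharP K p] {n d : ℕ}
    {W : Bool → Matrix (Fin n) (Fin p) (MvPolynomial (Fin d) K)} (hW : IsHyperbolicFrame W)
    (k₀ : Fin d) (j₀ : Fin p) {f : Rpoly 𝔽 n d} (hf : Decomposable 𝔽 (invO 𝔽 n d) f) :
    evalGeneric (hyperbolicPoint W MvPolynomial.X k₀ j₀) f ∈ squareIdeal K (Fin d) := by
  let J : Ideal (MvPolynomial (Fin d) K) := squareIdeal K (Fin d) ⊔ Ideal.span {MvPolynomial.X k₀}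
  have hk₀ : Ideal.Quotient.mk J (MvPolynomial.X k₀) = 0 :=
    Ideal.Quotient.eq_zero_iff_mem.mpr (Ideal.mem_sup_right (Ideal.mem_span_singleton_self _))
  have hsq (k : Fin d) : Ideal.Quotient.mk J (MvPolynomial.X k) ^ 2 = 0 := by
    rw [← map_pow]
    exact Ideal.Quotient.eq_zero_iff_mem.mpr (Ideal.mem_sup_left (X_pow_two_mem_squareIdeal k))
  have : Fact (Fintype.card (Fin p)).Prime := by rwa [Fintype.card_fin]
  have : CharP (MvPolynomial (Fin d) K) (Fintype.card (Fin p)) := by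
    rw [Fintype.card_fin]
    infer_instance
  refine sup_span_X_mul_self_le_squareIdeal k₀ (hf.map_mem_mul fun g hg i hi hgi => ?_)
  refine evalGeneric_mem_of_mem_invO (fun l hl => ?_) hg hi hgi
  rw [hW.map_charpoly_prod_letter_hyperbolicPoint hk₀ hsq j₀ hl, Fintype.card_fin]

theorem exists_isHyperbolicFrame_mvPolynomial (K ν : Type*) [Field K] [IsAlgClosed K]
    (htwo : (2 : K) ≠ 0) {n p : ℕ} (hpn : 2 * p ≤ n) :
    ∃ W : Bool → Matrix (Fin n) (Fin p) (MvPolynomial ν K), IsHyperbolicFrame W := by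
  refine exists_isHyperbolicFrame (by simpa using hpn) ?_ ?_
  · simpa only [map_ofNat] using (IsUnit.mk0 _ htwo).map (MvPolynomial.C (σ := ν))
  · have hsq : IsSquare (-1 : K) := IsAlgClosed.exists_eq_mul_self _
    simpa using hsq.map (MvPolynomial.C (σ := ν))

theorem sum_constant_coeffs_eq_zero_of_decomposable_general
    (𝔽 : Type) [Field 𝔽] (p : ℕ) [Fact p.Prime] [CharP 𝔽 p] (n d : ℕ) (hd : 1 ≤ d)
    (hpn : 2 * p ≤ n) (hp2 : p ≠ 2) (α : Equiv.Perm (Fin d) → (Fin d → Bool) → 𝔽)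
    (hdec : Decomposable 𝔽 (invO 𝔽 n d)
      (∑ σ : Equiv.Perm (Fin d), ∑ δ : Fin d → Bool, α σ δ •
        Matrix.trace (List.ofFn (fun i : Fin d =>
          if δ i then (Xgen 𝔽 n d (σ i))ᵀ else Xgen 𝔽 n d (σ i))).prod)) :
    ∑ σ : Equiv.Perm (Fin d),
      (α σ (fun _ => false) + α σ (fun _ => true)) = 0 := by
  let K := AlgebraicClosure 𝔽
  have : CharP K p := charP_of_injective_algebraMap (algebraMap 𝔽 K).injective p
  have htwo : (2 : K) ≠ 0 := Ring.two_ne_zero (by rwa [ringChar.eq K p])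
  obtain ⟨W, hW⟩ := exists_isHyperbolicFrame_mvPolynomial K (Fin d) htwo hpn
  have hmem := hW.evalGeneric_mem_squareIdeal ⟨0, hd⟩ ⟨0, (Fact.out : p.Prime).pos⟩ hdec
  simp only [map_sum, map_smul, evalGeneric_trace_prod_ofFn] at hmem
  rw [hW.sum_smul_trace_prod_letter_hyperbolicPoint, Algebra.smul_def,
    MvPolynomial.algebraMap_apply] at hmem
  exact (map_eq_zero _).mp (eq_zero_of_C_mul_prod_X_mem_squareIdeal hmem)

theorem sum_constant_coeffs_eq_zero_of_decomposable
    (𝔽 : Type) [Field 𝔽] [Infinite 𝔽] (n d : ℕ) (hn : 2 ≤ n) (hd : 1 ≤ d)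
    (hp0 : 0 < ringChar 𝔽) (hpn : 2 * ringChar 𝔽 ≤ n) (hp2 : ringChar 𝔽 ≠ 2)
    (α : Equiv.Perm (Fin d) → (Fin d → Bool) → 𝔽)
    (hdec : Decomposable 𝔽 (invO 𝔽 n d)
      (∑ σ : Equiv.Perm (Fin d), ∑ δ : Fin d → Bool, α σ δ •
        Matrix.trace (List.ofFn (fun i : Fin d =>
          if δ i then (Xgen 𝔽 n d (σ i))ᵀ else Xgen 𝔽 n d (σ i))).prod)) :
    ∑ σ : Equiv.Perm (Fin d),
      (α σ (fun _ => false) + α σ (fun _ => true)) = 0 := by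
  have : Fact (ringChar 𝔽).Prime := ⟨(CharP.char_is_prime_or_zero 𝔽 _).resolve_right hp0.ne'⟩
  exact sum_constant_coeffs_eq_zero_of_decomposable_general 𝔽 _ n d hd hpn hp2 α hdec

end
end

section
/- Let 𝔽 be an infinite field of characteristic p with 0 < p ≤ n/2 and p ≠ 2, and let d ≥ 1 be even. Then every set S of homogeneous elements that generates R₋^{O(n)} as an 𝔽-algebra contains an element of degree at least d. -/
open Matrix
noncomputable section

/-!
Substitute `X_k⁻ ↦ y_k M_k` for skew-symmetric scalar matrices `M_k`, with new variables `y_k`.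
Then `σ_t` of a word becomes a scalar multiple of the `t`-th power of the corresponding monomial in
the `y_k`, so a multilinear monomial can only come from a trace. Take `M_k = J` for all `k` but one,
where `J` consists of `p` diagonal blocks `!![0, -1; 1, 0]` and zeros, and let the exceptional `M_z`
be a single such block. Every positive power of `J` has trace divisible by `p`, so the image of an
invariant involves no nonconstant multilinear monomial without `y_z`. As every nontrivial
factorization of `y_1 ⋯ y_d` has a factor without `y_z`, this monomial does not occur in the image
of a polynomial in invariants of degree less than `d`. It does occur in the image of
`tr (X_1⁻ ⋯ X_d⁻)`, with coefficient `± 2`.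
-/

section ListProd

variable {α R : Type*}

theorem list_prod_map_smul {A : Type*} [CommSemiring R] [Semiring A] [Algebra R A] (c : α → R)
    (f : α → A) (l : List α) :
    (l.map fun k => c k • f k).prod = (l.map c).prod • (l.map f).prod := by
  induction l with
  | nil => simp
  | cons k l ih => simp only [List.map_cons, List.prod_cons, ih, smul_mul_smul_comm]

variable {ι κ : Type*} [Fintype ι] [DecidableEq ι] [Fintype κ] [DecidableEq κ]

open scoped Kronecker in
theorem list_prod_map_kronecker_right [CommSemiring R] (A : α → Matrix ι ι R) (B : Matrix κ κ R)
    (l : List α) :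
    (l.map fun k => A k ⊗ₖ B).prod = (l.map A).prod ⊗ₖ (B ^ l.length) := by
  induction l with
  | nil => simp
  | cons k l ih =>
    simp only [List.map_cons, List.prod_cons, ih, List.length_cons, pow_succ', mul_kronecker_mul]

theorem list_prod_map_mul_mul [Semiring R] {P : Matrix ι κ R} {Q : Matrix κ ι R}
    (hQP : Q * P = 1) (A : α → Matrix κ κ R) {l : List α} (hl : l ≠ []) :
    (l.map fun k => P * A k * Q).prod = P * (l.map A).prod * Q := by
  induction l with
  | nil => exact absurd rfl hl
  | cons k l ih =>
    rcases eq_or_ne l [] with rfl | hl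
    · simp
    · calc ((k :: l).map fun k => P * A k * Q).prod
          = P * A k * (Q * P) * (l.map A).prod * Q := by
            rw [List.map_cons, List.prod_cons, ih hl]
            simp only [Matrix.mul_assoc]
        _ = P * ((k :: l).map A).prod * Q := by
            simp only [hQP, Matrix.mul_one, List.map_cons, List.prod_cons, Matrix.mul_assoc]

end ListProd

section CharpolyCoeff

variable {R ι : Type*} [CommRing R] [Fintype ι] [DecidableEq ι]

theorem charpoly_coeff_card_sub_smul (c : R) (A : Matrix ι ι R) {t : ℕ}
    (ht : t ≤ Fintype.card ι) :
    (c • A).charpoly.coeff (Fintype.card ι - t) =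
      c ^ t * A.charpoly.coeff (Fintype.card ι - t) := by
  have minor_smul (s : Finset ι) (hs : s ∈ Finset.univ.powersetCard t) :
      ((c • A).submatrix ((↑) : s → ι) (↑)).det = c ^ t * (A.submatrix ((↑) : s → ι) (↑)).det := by
    rw [submatrix_smul, Pi.smul_apply, Pi.smul_apply, det_smul, Fintype.card_coe,
      (Finset.mem_powersetCard.mp hs).2]
  rw [charpoly_coeff_eq_sum_minors _ t ht, charpoly_coeff_eq_sum_minors _ t ht,
    Finset.sum_congr rfl minor_smul, ← Finset.mul_sum, mul_left_comm]

theorem neg_one_pow_one_mul_charpoly_coeff_eq_trace {n : ℕ} (hn : 0 < n)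
    (A : Matrix (Fin n) (Fin n) R) : (-1) ^ 1 * A.charpoly.coeff (n - 1) = A.trace := by
  have : NeZero n := ⟨hn.ne'⟩
  rw [trace_eq_neg_charpoly_coeff, Fintype.card_fin, pow_one, neg_one_mul]

end CharpolyCoeff

section SkewInflation

open scoped Kronecker

variable {α R ι κ : Type*} [CommRing R] [DecidableEq ι] [Fintype κ]

/-- The matrix obtained from `A` by replacing each entry `a` by the `2 × 2` block `a • J`, where `J`
is the standard symplectic matrix, and padding with zeros along an embedding `f` of the index
types. It turns symmetric matrices into skew-symmetric ones. -/
def skewInflation (f : κ × (Unit ⊕ Unit) ↪ ι) (A : Matrix κ κ R) : Matrix ι ι R :=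
  (1 : Matrix ι ι R).submatrix id f * (A ⊗ₖ J Unit R) * (1 : Matrix ι ι R).submatrix f id

theorem transpose_skewInflation (f : κ × (Unit ⊕ Unit) ↪ ι) {A : Matrix κ κ R} (hA : A.IsSymm) :
    (skewInflation f A)ᵀ = -skewInflation f A := by
  have kronecker_skew : (A ⊗ₖ J Unit R)ᵀ = -(A ⊗ₖ J Unit R) := by
    rw [← kroneckerMap_transpose, hA.eq, J_transpose]
    ext
    exact mul_neg _ _
  simp only [skewInflation, transpose_mul, transpose_submatrix, transpose_one, kronecker_skew,
    Matrix.neg_mul, Matrix.mul_neg, Matrix.mul_assoc]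

variable [Fintype ι] [DecidableEq κ]

theorem trace_list_prod_map_skewInflation (f : κ × (Unit ⊕ Unit) ↪ ι) (A : α → Matrix κ κ R)
    {l : List α} (hl : l ≠ []) :
    (l.map fun k => skewInflation f (A k)).prod.trace =
      (l.map A).prod.trace * (J Unit R ^ l.length).trace := by
  have retraction : (1 : Matrix ι ι R).submatrix f id * (1 : Matrix ι ι R).submatrix id f = 1 := by
    rw [← submatrix_mul _ _ f id f Function.bijective_id, Matrix.mul_one, submatrix_one_embedding]
  simp only [skewInflation]
  rw [list_prod_map_mul_mul retraction, trace_mul_cycle, retraction, Matrix.one_mul,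
    list_prod_map_kronecker_right, trace_kronecker]
  exact hl

theorem trace_J_unit_pow_ne_zero (h2 : (2 : R) ≠ 0) {m : ℕ} (hm : Even m) :
    (J Unit R ^ m).trace ≠ 0 := by
  obtain ⟨l, rfl⟩ := hm.two_dvd
  rw [pow_mul, sq, J_squared]
  rcases neg_one_pow_eq_or (Matrix (Unit ⊕ Unit) (Unit ⊕ Unit) R) l with h | h <;>
    simpa [h, one_add_one_eq_two] using h2

theorem exists_skew_family_trace_eq_zero_of_notMem (z : α) {q : ℕ} (hq : 0 < q)
    (hqι : 2 * q ≤ Fintype.card ι) (hqR : (q : R) = 0) (h2 : (2 : R) ≠ 0) :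
    ∃ M : α → Matrix ι ι R, (∀ k, (M k)ᵀ = -M k) ∧
      (∀ l : List α, l ≠ [] → z ∉ l → (l.map M).prod.trace = 0) ∧
      ∀ l : List α, z ∉ l → Even (z :: l).length → ((z :: l).map M).prod.trace ≠ 0 := by
  classical
  obtain ⟨f⟩ : Nonempty (Fin q × (Unit ⊕ Unit) ↪ ι) :=
    Function.Embedding.nonempty_of_card_le (by simpa [mul_comm q] using hqι)
  let A : α → Matrix (Fin q) (Fin q) R :=
    Function.update 1 z (diagonal (Pi.single ⟨0, hq⟩ 1))
  have A_symm (k : α) : (A k).IsSymm := by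
    rcases eq_or_ne k z with rfl | hk
    · simp [A]
    · simp [A, hk]
  have prod_A {l : List α} (hz : z ∉ l) : (l.map A).prod = 1 :=
    List.prod_eq_one fun _ hB => by
      obtain ⟨k, hk, rfl⟩ := List.mem_map.mp hB
      simp [A, ne_of_mem_of_not_mem hk hz]
  refine ⟨fun k => skewInflation f (A k), fun k => transpose_skewInflation f (A_symm k),
    fun l hl hz => ?_, fun l hz heven => ?_⟩
  · rw [trace_list_prod_map_skewInflation f A hl, prod_A hz, trace_one, Fintype.card_fin, hqR,
      zero_mul]
  · rw [trace_list_prod_map_skewInflation f A (List.cons_ne_nil z l), List.map_cons, List.prod_cons,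
      prod_A hz, mul_one]
    simpa [A] using trace_J_unit_pow_ne_zero h2 heven

end SkewInflation

section Supports

open MvPolynomial

/-- The submonoid `N \ {m}` for a nonzero `m` that is not a sum of two nonzero elements of `N`.
On the level of exponents, it describes polynomials in which the monomial `y ^ m` does not occur. -/
def eraseIndecomposable {M : Type*} [AddMonoid M] (N : AddSubmonoid M) (m : M) (hm0 : m ≠ 0)
    (hm : ∀ a ∈ N, ∀ b ∈ N, a + b = m → a = 0 ∨ b = 0) : AddSubmonoid M where
  carrier := {s | s ∈ N ∧ s ≠ m}
  zero_mem' := ⟨N.zero_mem, hm0.symm⟩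
  add_mem' := by
    rintro a b ⟨ha, ham⟩ ⟨hb, hbm⟩
    refine ⟨N.add_mem ha hb, fun hab => ?_⟩
    rcases hm a ha b hb hab with rfl | rfl
    · exact hbm (by rwa [zero_add] at hab)
    · exact ham (by rwa [add_zero] at hab)

variable {σ τ R : Type*} [CommSemiring R]

/-- The subalgebra of polynomials whose monomials all have exponents in the submonoid `N`:
`MvPolynomial.restrictSupport` as a subalgebra. -/
def supportSubalgebra (R : Type*) [CommSemiring R] (N : AddSubmonoid (σ →₀ ℕ)) :
    Subalgebra R (MvPolynomial σ R) :=
  (restrictSupport R (N : Set (σ →₀ ℕ))).toSubalgebra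
    (by rw [one_def, monomial_mem_restrictSupport]; exact Or.inl N.zero_mem) fun f g hf hg => by
      have hfg := Submodule.mul_mem_mul hf hg
      rw [← restrictSupport_add] at hfg
      exact restrictSupport_mono R (Set.add_subset_iff.mpr fun _ ha _ hb => N.add_mem ha hb) hfg

theorem mem_supportSubalgebra {N : AddSubmonoid (σ →₀ ℕ)} {f : MvPolynomial σ R} :
    f ∈ supportSubalgebra R N ↔ ∀ s, coeff s f ≠ 0 → s ∈ N := by
  rw [supportSubalgebra, Submodule.mem_toSubalgebra]
  simp only [mem_restrictSupport_iff, Set.subset_def, mem_support_iff, SetLike.mem_coe]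

/-- The exponents `s` such that `y ^ s`, if it is a nonconstant divisor of `y ^ m`, is divisible by
the variable `y z`. Images of invariants are supported on these exponents. -/
def exponentsMeeting (m : σ →₀ ℕ) (z : σ) : AddSubmonoid (σ →₀ ℕ) where
  carrier := {s | s ≤ m → s z = 0 → s = 0}
  zero_mem' _ _ := rfl
  add_mem' := by
    intro a b ha hb hab hz
    obtain ⟨haz, hbz⟩ := Nat.add_eq_zero_iff.mp hz
    rw [ha (le_self_add.trans hab) haz, hb (le_add_self.trans hab) hbz, add_zero]

theorem eq_zero_or_eq_zero_of_mem_exponentsMeeting {m : σ →₀ ℕ} {z : σ} (hm : m z = 1) :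
    ∀ a ∈ exponentsMeeting m z, ∀ b ∈ exponentsMeeting m z, a + b = m → a = 0 ∨ b = 0 := by
  rintro a ha b hb rfl
  rcases Nat.add_eq_one_iff.mp hm with ⟨haz, -⟩ | ⟨-, hbz⟩
  · exact Or.inl (ha le_self_add haz)
  · exact Or.inr (hb le_add_self hbz)

theorem coeff_eq_zero_of_mem_adjoin_exponentsMeeting {m : σ →₀ ℕ} {z : σ} (hm : m z = 1)
    {S : Set (MvPolynomial σ R)} (hS : ∀ f ∈ S, f ∈ supportSubalgebra R (exponentsMeeting m z))
    (hSm : ∀ f ∈ S, coeff m f = 0) {f : MvPolynomial σ R} (hf : f ∈ Algebra.adjoin R S) :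
    coeff m f = 0 := by
  have hm0 : m ≠ 0 := by rintro rfl; simp at hm
  let N := eraseIndecomposable (exponentsMeeting m z) m hm0
    (eq_zero_or_eq_zero_of_mem_exponentsMeeting hm)
  have adjoin_le : Algebra.adjoin R S ≤ supportSubalgebra R N :=
    Algebra.adjoin_le fun g hg => mem_supportSubalgebra.mpr fun s hs =>
      ⟨mem_supportSubalgebra.mp (hS g hg) s hs, fun hsm => hs (hsm ▸ hSm g hg)⟩
  by_contra hfm
  exact (mem_supportSubalgebra.mp (adjoin_le hf) m hfm).2 rfl

theorem totalDegree_aeval_le {g : σ → MvPolynomial τ R} (hg : ∀ i, (g i).totalDegree ≤ 1)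
    (f : MvPolynomial σ R) : (aeval g f).totalDegree ≤ f.totalDegree := by
  rw [aeval_def, eval₂_eq]
  refine totalDegree_finsetSum_le fun s hs => ?_
  calc (algebraMap R (MvPolynomial τ R) (coeff s f) * ∏ i ∈ s.support, g i ^ s i).totalDegree
      ≤ 0 + ∑ i ∈ s.support, (g i ^ s i).totalDegree :=
        (totalDegree_mul _ _).trans
          (add_le_add (totalDegree_C _).le (totalDegree_finsetProd _ _))
    _ ≤ ∑ i ∈ s.support, s i := by
        rw [zero_add]
        exact Finset.sum_le_sum fun i _ =>
          (totalDegree_pow _ _).trans (mul_le_of_le_one_right (Nat.zero_le _) (hg i))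
    _ ≤ f.totalDegree := le_totalDegree hs

theorem list_prod_map_X [DecidableEq σ] (l : List σ) :
    (l.map X).prod = monomial (Multiset.toFinsupp (l : Multiset σ)) (1 : R) := by
  induction l with
  | nil => simp
  | cons k l ih =>
    rw [List.map_cons, List.prod_cons, ih, X, monomial_mul, one_mul, ← Multiset.cons_coe,
      ← Multiset.singleton_add, map_add, Multiset.toFinsupp_singleton]

end Supports

section SkewSubstitution

open MvPolynomial

variable {𝔽 : Type} [Field 𝔽] {n d : ℕ}

/-- The substitution `x_{ij}(k) ↦ (M k)_{ij} y_k`; it sends `X_k⁻` to `y_k • M k` when `M k` is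
alternating. -/
def skewSubst (M : Fin d → Matrix (Fin n) (Fin n) 𝔽) :
    Rpoly 𝔽 n d →ₐ[𝔽] MvPolynomial (Fin d) 𝔽 :=
  aeval fun x => X x.2.2 * C (M x.2.2 x.1 x.2.1)

theorem totalDegree_skewSubst_le (M : Fin d → Matrix (Fin n) (Fin n) 𝔽) (f : Rpoly 𝔽 n d) :
    (skewSubst M f).totalDegree ≤ f.totalDegree :=
  totalDegree_aeval_le (fun _ => (totalDegree_mul _ _).trans (by simp)) f

variable {M : Fin d → Matrix (Fin n) (Fin n) 𝔽}

theorem skewSubst_mapMatrix_XgenSkew (k : Fin d) (hskew : (M k)ᵀ = -M k)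
    (hdiag : ∀ i, M k i i = 0) :
    (skewSubst M).mapMatrix (XgenSkew 𝔽 n d k) =
      (X k : MvPolynomial (Fin d) 𝔽) • C.mapMatrix (M k) := by
  ext1 i j
  simp only [AlgHom.mapMatrix_apply, RingHom.mapMatrix_apply, map_apply, Matrix.smul_apply,
    smul_eq_mul, XgenSkew]
  rcases lt_trichotomy j i with hji | rfl | hij
  · simp [hji, skewSubst]
  · simp [hdiag]
  · have hM : M k j i = -M k i j := congrFun₂ hskew i j
    simp [hij, hij.not_gt, skewSubst, hM]

theorem skewSubst_mapMatrix_word (hskew : ∀ k, (M k)ᵀ = -M k) (hdiag : ∀ k i, M k i i = 0)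
    (l : List (Fin d)) :
    (skewSubst M).mapMatrix (l.map (XgenSkew 𝔽 n d)).prod =
      monomial (Multiset.toFinsupp (l : Multiset (Fin d))) (1 : 𝔽) •
        C.mapMatrix (l.map M).prod := by
  rw [map_list_prod, map_list_prod, List.map_map, List.map_map, ← list_prod_map_X,
    ← list_prod_map_smul]
  congr 2
  funext k
  exact skewSubst_mapMatrix_XgenSkew k (hskew k) (hdiag k)

theorem skewSubst_sigmaCoeff (hskew : ∀ k, (M k)ᵀ = -M k) (hdiag : ∀ k i, M k i i = 0)
    {t : ℕ} (ht : t ≤ n) (l : List (Fin d)) :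
    skewSubst M (sigmaCoeff t (l.map (XgenSkew 𝔽 n d)).prod) =
      monomial (t • Multiset.toFinsupp (l : Multiset (Fin d)))
        ((-1) ^ t * (l.map M).prod.charpoly.coeff (n - t)) := by
  have map_coeff : skewSubst M ((l.map (XgenSkew 𝔽 n d)).prod.charpoly.coeff (n - t)) =
      ((skewSubst M).mapMatrix (l.map (XgenSkew 𝔽 n d)).prod).charpoly.coeff (n - t) := by
    rw [AlgHom.mapMatrix_apply, ← RingHom.coe_coe (skewSubst M), charpoly_map,
      Polynomial.coeff_map]
  have coeff_smul := charpoly_coeff_card_sub_smul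
    (monomial (Multiset.toFinsupp (l : Multiset (Fin d))) (1 : 𝔽))
    (C.mapMatrix (l.map M).prod) (ht.trans_eq (Fintype.card_fin n).symm)
  rw [Fintype.card_fin] at coeff_smul
  rw [sigmaCoeff, map_mul, map_pow, map_neg, map_one, map_coeff,
    skewSubst_mapMatrix_word hskew hdiag, coeff_smul, RingHom.mapMatrix_apply, charpoly_map,
    Polynomial.coeff_map, monomial_pow, one_pow,
    mul_left_comm, mul_comm, ← map_one C, ← map_neg, ← map_pow, ← map_mul, C_mul_monomial, mul_one]

theorem invOminus_le {A : Subalgebra 𝔽 (Rpoly 𝔽 n d)}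
    (hA : ∀ t, 1 ≤ t → t ≤ n → ∀ l : List (Fin d), l ≠ [] →
      sigmaCoeff t (l.map (XgenSkew 𝔽 n d)).prod ∈ A) :
    invOminus 𝔽 n d ≤ A := by
  refine Algebra.adjoin_le ?_
  rintro _ ⟨t, ht1, htn, w, hw0, hw, rfl⟩
  obtain ⟨l, rfl⟩ : w ∈ Set.range (List.map (XgenSkew 𝔽 n d)) := by
    rw [Set.range_list_map]
    exact fun B hB => (hw B hB).imp fun _ hk => hk.symm
  exact hA t ht1 htn l (by simpa using hw0)

theorem sigmaCoeff_word_mem_invOminus {t : ℕ} (ht1 : 1 ≤ t) (htn : t ≤ n) {l : List (Fin d)}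
    (hl : l ≠ []) : sigmaCoeff t (l.map (XgenSkew 𝔽 n d)).prod ∈ invOminus 𝔽 n d := by
  refine Algebra.subset_adjoin ⟨t, ht1, htn, _, by simpa using hl, fun B hB => ?_, rfl⟩
  obtain ⟨k, -, rfl⟩ := List.mem_map.mp hB
  exact ⟨k, rfl⟩

theorem skewSubst_mem_supportSubalgebra (hskew : ∀ k, (M k)ᵀ = -M k)
    (hdiag : ∀ k i, M k i i = 0) {z : Fin d}
    (htrace : ∀ l : List (Fin d), l ≠ [] → z ∉ l → (l.map M).prod.trace = 0)
    {m : Fin d →₀ ℕ} (hm : ∀ k, m k ≤ 1) {f : Rpoly 𝔽 n d} (hf : f ∈ invOminus 𝔽 n d) :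
    skewSubst M f ∈ supportSubalgebra 𝔽 (exponentsMeeting m z) := by
  suffices hle : invOminus 𝔽 n d ≤
      (supportSubalgebra 𝔽 (exponentsMeeting m z)).comap (skewSubst M) from hle hf
  refine invOminus_le fun t ht1 htn l hl => ?_
  rw [Subalgebra.mem_comap, skewSubst_sigmaCoeff hskew hdiag htn, mem_supportSubalgebra]
  intro s hs hsm hsz
  rw [coeff_monomial] at hs
  obtain ⟨rfl, hcoeff⟩ := ite_ne_right_iff.mp hs
  simp only [Finsupp.smul_apply, Multiset.toFinsupp_apply, Multiset.coe_count, smul_eq_mul,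
    Nat.mul_eq_zero, Nat.ne_of_gt ht1, false_or, List.count_eq_zero] at hsz
  obtain ⟨k, hk⟩ := List.exists_mem_of_ne_nil l hl
  have ht : t = 1 := by
    have hcount : t * l.count k ≤ 1 := by simpa using (hsm k).trans (hm k)
    exact le_antisymm ((Nat.le_mul_of_pos_right t (List.count_pos_iff.mpr hk)).trans hcount) ht1
  subst ht
  rw [neg_one_pow_one_mul_charpoly_coeff_eq_trace htn, htrace l hl hsz] at hcoeff
  exact absurd rfl hcoeff

theorem coeff_skewSubst_eq_zero_of_mem_adjoin (hskew : ∀ k, (M k)ᵀ = -M k)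
    (hdiag : ∀ k i, M k i i = 0) {z : Fin d}
    (htrace : ∀ l : List (Fin d), l ≠ [] → z ∉ l → (l.map M).prod.trace = 0)
    {m : Fin d →₀ ℕ} (hm : ∀ k, m k ≤ 1) (hmz : m z = 1) {f : Rpoly 𝔽 n d}
    (hf : f ∈ Algebra.adjoin 𝔽
      {g | g ∈ invOminus 𝔽 n d ∧ g.totalDegree < ∑ k ∈ m.support, m k}) :
    coeff m (skewSubst M f) = 0 := by
  have himage : skewSubst M f ∈ (Algebra.adjoin 𝔽 _).map (skewSubst M) :=
    Subalgebra.mem_map.mpr ⟨f, hf, rfl⟩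
  rw [AlgHom.map_adjoin] at himage
  refine coeff_eq_zero_of_mem_adjoin_exponentsMeeting hmz ?_ ?_ himage
  · rintro _ ⟨g, ⟨hg, -⟩, rfl⟩
    exact skewSubst_mem_supportSubalgebra hskew hdiag htrace hm hg
  · rintro _ ⟨g, ⟨-, hdeg⟩, rfl⟩
    exact coeff_eq_zero_of_totalDegree_lt ((totalDegree_skewSubst_le M g).trans_lt hdeg)

theorem sigmaCoeff_one_notMem_adjoin_of_trace_ne_zero (hn : 0 < n)
    (hskew : ∀ k, (M k)ᵀ = -M k) (hdiag : ∀ k i, M k i i = 0) {z : Fin d}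
    (htrace : ∀ l : List (Fin d), l ≠ [] → z ∉ l → (l.map M).prod.trace = 0)
    {l : List (Fin d)} (hl : l.Nodup) (hz : z ∈ l) (hne : (l.map M).prod.trace ≠ 0) :
    sigmaCoeff 1 (l.map (XgenSkew 𝔽 n d)).prod ∉
      Algebra.adjoin 𝔽 {f | f ∈ invOminus 𝔽 n d ∧ f.totalDegree < l.length} := by
  intro hmem
  set m : Fin d →₀ ℕ := Multiset.toFinsupp (l : Multiset (Fin d)) with hm
  have m_apply (k : Fin d) : m k = l.count k := by
    rw [hm, Multiset.toFinsupp_apply, Multiset.coe_count]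
  have sum_m : ∑ k ∈ m.support, m k = l.length := Multiset.toFinsupp_sum_eq _
  rw [← sum_m] at hmem
  have hcoeff := coeff_skewSubst_eq_zero_of_mem_adjoin hskew hdiag htrace
    (fun k => m_apply k ▸ List.nodup_iff_count_le_one.mp hl k)
    (m_apply z ▸ List.count_eq_one_of_mem hl hz) hmem
  rw [skewSubst_sigmaCoeff hskew hdiag (Nat.one_le_of_lt hn), one_smul, ← hm, coeff_monomial,
    if_pos rfl, neg_one_pow_one_mul_charpoly_coeff_eq_trace hn] at hcoeff
  exact hne hcoeff

end SkewSubstitution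

theorem sigmaCoeff_one_skew_word_notMem_adjoin {𝔽 : Type} [Field 𝔽] {n d : ℕ}
    (hp0 : 0 < ringChar 𝔽) (hpn : 2 * ringChar 𝔽 ≤ n) (hp2 : ringChar 𝔽 ≠ 2)
    {l : List (Fin d)} (hl0 : l ≠ []) (hl : l.Nodup) (heven : Even l.length) :
    sigmaCoeff 1 (l.map (XgenSkew 𝔽 n d)).prod ∉
      Algebra.adjoin 𝔽 {f | f ∈ invOminus 𝔽 n d ∧ f.totalDegree < l.length} := by
  obtain ⟨z, l, rfl⟩ := List.exists_cons_of_ne_nil hl0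
  have h2 : (2 : 𝔽) ≠ 0 := Ring.two_ne_zero hp2
  obtain ⟨M, hskew, htrace, hne⟩ := exists_skew_family_trace_eq_zero_of_notMem (ι := Fin n) z hp0
    (by rwa [Fintype.card_fin]) (ringChar.Nat.cast_ringChar (R := 𝔽)) h2
  have hdiag (k : Fin d) (i : Fin n) : M k i i = 0 := by
    have hii : M k i i = -M k i i := congrFun₂ (hskew k) i i
    exact (mul_eq_zero_iff_left h2).mp (by linear_combination hii)
  exact sigmaCoeff_one_notMem_adjoin_of_trace_ne_zero (by omega) hskew hdiag htrace hl
    List.mem_cons_self (hne l (List.nodup_cons.mp hl).1 heven)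

theorem invOminus_generating_set_degree_ge_general
    (𝔽 : Type) [Field 𝔽] (n d : ℕ) (hd : 1 ≤ d) (hdeven : Even d)
    (hp0 : 0 < ringChar 𝔽) (hpn : 2 * ringChar 𝔽 ≤ n) (hp2 : ringChar 𝔽 ≠ 2)
    (S : Set (Rpoly 𝔽 n d)) (hgen : Algebra.adjoin 𝔽 S = invOminus 𝔽 n d) :
    ∃ f ∈ S, d ≤ f.totalDegree := by
  by_contra! hlt
  have hword0 : List.finRange d ≠ [] := by simpa using Nat.ne_of_gt hd
  have htrace_mem : sigmaCoeff 1 ((List.finRange d).map (XgenSkew 𝔽 n d)).prod ∈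
      Algebra.adjoin 𝔽 S :=
    hgen ▸ sigmaCoeff_word_mem_invOminus le_rfl (by omega) hword0
  refine sigmaCoeff_one_skew_word_notMem_adjoin hp0 hpn hp2 hword0 (List.nodup_finRange d)
    (by rwa [List.length_finRange]) (Algebra.adjoin_mono (fun f hf => ?_) htrace_mem)
  exact ⟨hgen ▸ Algebra.subset_adjoin hf, (hlt f hf).trans_eq List.length_finRange.symm⟩

theorem invOminus_generating_set_degree_ge
    (𝔽 : Type) [Field 𝔽] [Infinite 𝔽] (n d : ℕ) (hn : 2 ≤ n) (hd : 1 ≤ d) (hdeven : Even d)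
    (hp0 : 0 < ringChar 𝔽) (hpn : 2 * ringChar 𝔽 ≤ n) (hp2 : ringChar 𝔽 ≠ 2)
    (S : Set (Rpoly 𝔽 n d)) (hhom : ∀ f ∈ S, ∃ k, MvPolynomial.IsHomogeneous f k)
    (hgen : Algebra.adjoin 𝔽 S = invOminus 𝔽 n d) :
    ∃ f ∈ S, d ≤ f.totalDegree := by
  exact invOminus_generating_set_degree_ge_general 𝔽 n d hd hdeven hp0 hpn hp2 S hgen

end
end
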